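/- There exists a polynomial map f : ℝ² → ℝ² (both coordinate functions real polynomials in two variables, of degree at least 2) that has two disjoint period doubling Cantor attractors and a strange attractor. -/

import Mathlib

open Filter Set

/-- `f : ℝ² → ℝ²` is a polynomial map of degree at least 2. -/
def IsPolyMapDegTwo (f : ℝ × ℝ → ℝ × ℝ) : Prop :=
  ∃ P Q : MvPolynomial (Fin 2) ℝ,
    2 ≤ max P.totalDegree Q.totalDegree ∧
    ∀ p : ℝ × ℝ,
      f p = (MvPolynomial.eval ![p.1, p.2] P, MvPolynomial.eval ![p.1, p.2] Q)

/-- `A` is a period doubling Cantor attractor of `f`. -/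
def IsPDCantorAttractor (f : ℝ × ℝ → ℝ × ℝ) (A : Set (ℝ × ℝ)) : Prop :=
  IsCompact A ∧ f '' A = A ∧
    (∃ e : A ≃ₜ ℤ_[2], ∀ (x : A) (hx : f ↑x ∈ A), e ⟨f ↑x, hx⟩ = e x + 1) ∧
    ∃ U : Set (ℝ × ℝ), IsOpen U ∧ A ⊆ U ∧
      ∀ᵐ x ∂MeasureTheory.volume, x ∈ U →
        (omegaLimit atTop (fun n : ℕ => f^[n]) {x} ∩ A).Nonempty

/-- `Λ` is a strange attractor of `f`: the attractor of a trapping region `U`, containing a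
point `z` with dense forward orbit in `Λ` satisfying the Collet–Eckmann condition. -/
def IsStrangeAttractor (f : ℝ × ℝ → ℝ × ℝ) (Λ : Set (ℝ × ℝ)) : Prop :=
  ∃ U : Set (ℝ × ℝ), IsOpen U ∧ closure (f '' U) ⊆ U ∧
    Λ = ⋂ j : ℕ, f^[j] '' U ∧
    ∃ z ∈ Λ, Λ ⊆ closure (Set.range fun n : ℕ => f^[n] z) ∧
      ∃ v : ℝ × ℝ, v ≠ 0 ∧ ∃ κ : ℝ, 0 < κ ∧
        ∀ n : ℕ, 0 < n → Real.exp (κ * n) ≤ ‖fderiv ℝ f^[n] z v‖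


open Filter Set

noncomputable def pH : ℕ → ℝ → ℝ → ℝ
  | 0, r, u => 1 - r * (1 - u) ^ 2
  | n + 1, r, u => - pH n r ((pH n r u) ^ 2)

lemma pH_contDiff (n : ℕ) : ContDiff ℝ 1 (fun q : ℝ × ℝ => pH n q.1 q.2) := by
  induction n with
  | zero => simp only [pH]; fun_prop
  | succ n ih =>
    simp only [pH]
    have h : ContDiff ℝ 1 (fun q : ℝ × ℝ => (q.1, (pH n q.1 q.2) ^ 2)) :=
      contDiff_fst.prodMk (ih.pow 2)
    exact (ih.comp h).neg

lemma pH_cont (n : ℕ) {f g : ℝ → ℝ} (hf : Continuous f) (hg : Continuous g) :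
    Continuous (fun r => pH n (f r) (g r)) :=
  (pH_contDiff n).continuous.comp (hf.prodMk hg)

lemma stepA (n : ℕ) (s t : ℝ) (hst : s < t) (hv : ∀ r ∈ Icc s t, pH n r 0 < 0)
    (h1 : 0 ≤ pH (n + 1) s 0) (h2 : pH (n + 1) t 0 = pH n t 0) :
    ∃ s' t', s ≤ s' ∧ t' ≤ t ∧ s' < t' ∧
      (∀ r ∈ Icc s' t', pH (n + 1) r 0 < 0 ∧
        pH n r ((pH (n + 1) r 0) ^ 2) ≤ pH (n + 1) r 0) ∧
      0 ≤ pH (n + 2) s' 0 ∧ pH (n + 2) t' 0 = pH (n + 1) t' 0 := by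
  have cv : Continuous (fun r => pH (n + 1) r 0) := pH_cont _ continuous_id continuous_const
  have cz : Continuous (fun r => pH n r ((pH (n + 1) r 0) ^ 2) - pH (n + 1) r 0) :=
    (pH_cont n continuous_id (cv.pow 2)).sub cv
  have hvt : pH (n + 1) t 0 < 0 := by rw [h2]; exact hv t ⟨hst.le, le_rfl⟩
  -- last zero of v
  have hc1 : IsCompact (Icc s t ∩ {r | 0 ≤ pH (n + 1) r 0}) :=
    isCompact_Icc.inter_right (isClosed_le continuous_const cv)
  obtain ⟨s0, ⟨⟨hs0, hs0t⟩, hs0v⟩, hmax⟩ :=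
    hc1.exists_isGreatest ⟨s, ⟨⟨le_rfl, hst.le⟩, h1⟩⟩
  have hs0v' : pH (n + 1) s0 0 = 0 := by
    obtain ⟨x, hx, hx0⟩ := intermediate_value_Icc' hs0t cv.continuousOn
      (show (0 : ℝ) ∈ Icc _ _ from ⟨hvt.le, hs0v⟩)
    have : x ≤ s0 := hmax ⟨⟨hs0.trans hx.1, hx.2⟩, by simp only [mem_setOf_eq]; exact hx0.ge⟩
    have : x = s0 := le_antisymm this hx.1
    rw [← this]; exact hx0
  have hneg : ∀ r, s0 < r → r ≤ t → pH (n + 1) r 0 < 0 := by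
    intro r hr hrt
    by_contra hcon
    exact absurd (hmax ⟨⟨hs0.trans hr.le, hrt⟩, not_lt.mp hcon⟩) (not_le.mpr hr)
  have hzs : pH n s0 ((pH (n + 1) s0 0) ^ 2) - pH (n + 1) s0 0 < 0 := by
    rw [hs0v']; simpa using hv s0 ⟨hs0, hs0t⟩
  have hzt : 0 < pH n t ((pH (n + 1) t 0) ^ 2) - pH (n + 1) t 0 := by
    have : pH (n + 1) t 0 = - pH n t ((pH n t 0) ^ 2) := rfl
    have h3 := hv t ⟨hst.le, le_rfl⟩
    rw [h2] at this ⊢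
    linarith
  have hc2 : IsCompact (Icc s0 t ∩
      {r | 0 ≤ pH n r ((pH (n + 1) r 0) ^ 2) - pH (n + 1) r 0}) :=
    isCompact_Icc.inter_right (isClosed_le continuous_const cz)
  obtain ⟨t0, ⟨⟨ht0, ht0t⟩, ht0v⟩, hmin⟩ :=
    hc2.exists_isLeast ⟨t, ⟨⟨hs0t, le_rfl⟩, hzt.le⟩⟩
  have ht0z : pH n t0 ((pH (n + 1) t0 0) ^ 2) - pH (n + 1) t0 0 = 0 := by
    obtain ⟨x, hx, hx0⟩ := intermediate_value_Icc ht0 cz.continuousOn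
      (show (0 : ℝ) ∈ Icc _ _ from ⟨hzs.le, ht0v⟩)
    have : t0 ≤ x := hmin ⟨⟨hx.1, hx.2.trans ht0t⟩, by simp only [mem_setOf_eq]; exact hx0.ge⟩
    have : x = t0 := le_antisymm hx.2 this
    rw [← this]; exact hx0
  have hlt : s0 < t0 := by
    rcases ht0.lt_or_eq with h | h
    · exact h
    · rw [← h] at ht0z; linarith
  -- near s0
  obtain ⟨K, W, hW, hK⟩ := (pH_contDiff (n + 1)).locallyLipschitz (s0, (0 : ℝ))
  have e1 : ∀ᶠ r in nhds s0, (r, (pH (n + 1) r 0) ^ 2) ∈ W := by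
    have : Continuous (fun r : ℝ => (r, (pH (n + 1) r 0) ^ 2)) := continuous_id.prodMk (cv.pow 2)
    have h := this.tendsto s0
    rw [hs0v'] at h
    simp only [ne_eq, OfNat.ofNat_ne_zero, not_false_eq_true, zero_pow] at h
    exact h hW
  have e2 : ∀ᶠ r in nhds s0, (r, (0 : ℝ)) ∈ W := by
    have : Continuous (fun r : ℝ => (r, (0 : ℝ))) := continuous_id.prodMk continuous_const
    exact this.tendsto s0 hW
  have e3 : ∀ᶠ r in nhds s0, (K : ℝ) * |pH (n + 1) r 0| < 1 := by
    have : Continuous (fun r : ℝ => (K : ℝ) * |pH (n + 1) r 0|) := continuous_const.mul cv.abs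
    have h := this.tendsto s0
    rw [hs0v'] at h
    simp only [abs_zero, mul_zero] at h
    exact h.eventually (gt_mem_nhds one_pos)
  have e4 : ∀ᶠ r in nhdsWithin s0 (Ioi s0), r ∈ Ioo s0 t0 := Ioo_mem_nhdsGT hlt
  obtain ⟨s', ⟨⟨⟨a1, a2⟩, a3⟩, a4⟩⟩ :=
    ((((e1.and e2).and e3).filter_mono nhdsWithin_le_nhds).and e4).exists
  have hvs' := hneg s' a4.1 (a4.2.le.trans ht0t)
  refine ⟨s', t0, hs0.trans a4.1.le, ht0t, a4.2, ?_, ?_, ?_⟩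
  · intro r hr
    have hr0 : s0 < r := lt_of_lt_of_le a4.1 hr.1
    refine ⟨hneg r hr0 (hr.2.trans ht0t), ?_⟩
    rcases hr.2.lt_or_eq with h | h
    · by_contra hcon
      have : t0 ≤ r := hmin ⟨⟨hr0.le, hr.2.trans ht0t⟩, by
        simp only [mem_setOf_eq]; linarith [not_le.mp hcon]⟩
      linarith
    · rw [h]; linarith
  · have h := hK.dist_le_mul _ a1 _ a2
    rw [Prod.dist_eq] at h
    simp only [dist_self, Real.dist_eq, sub_zero] at h
    rw [max_eq_right (abs_nonneg _), abs_of_nonneg (sq_nonneg (pH (n + 1) s' 0))] at h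
    have h' := (abs_le.mp h).2
    change 0 ≤ - pH (n + 1) s' ((pH (n + 1) s' 0) ^ 2)
    rw [abs_of_neg hvs'] at a3
    nlinarith
  · have e : pH n t0 ((pH (n + 1) t0 0) ^ 2) = pH (n + 1) t0 0 := by linarith
    change - pH (n + 1) t0 ((pH (n + 1) t0 0) ^ 2) = _
    have : pH (n + 1) t0 ((pH (n + 1) t0 0) ^ 2)
      = - pH n t0 ((pH n t0 ((pH (n + 1) t0 0) ^ 2)) ^ 2) := rfl
    rw [this, e, e, neg_neg]

lemma exists_param : ∃ r : ℝ, 6/5 ≤ r ∧ r ≤ 2 ∧ 1 ≤ r ^ 3 * (2 - r) ∧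
    (∀ n, pH n r 0 < 0) ∧ (∀ n, pH n r ((pH (n + 1) r 0) ^ 2) ≤ pH (n + 1) r 0) := by
  -- base interval
  have cq : Continuous (fun r : ℝ => r ^ 3 * (2 - r)) := by fun_prop
  have hc : IsCompact (Icc (6/5 : ℝ) 2 ∩ {r | r ^ 3 * (2 - r) ≤ 1}) :=
    isCompact_Icc.inter_right (isClosed_le cq continuous_const)
  obtain ⟨t, ⟨⟨ht1, ht2⟩, ht3⟩, hmin⟩ := hc.exists_isLeast ⟨2, ⟨⟨by norm_num, le_rfl⟩, by
    simp only [mem_setOf_eq]; norm_num⟩⟩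
  have ht : t ^ 3 * (2 - t) = 1 := by
    obtain ⟨x, hx, hx0⟩ := intermediate_value_Icc' ht1 cq.continuousOn
      (show (1 : ℝ) ∈ Icc _ _ from ⟨ht3, by norm_num⟩)
    have : t ≤ x := hmin ⟨⟨hx.1, hx.2.trans ht2⟩, hx0.le⟩
    have : x = t := le_antisymm hx.2 this
    rw [← this]; exact hx0
  have hlt : 6/5 < t := by
    rcases ht1.lt_or_eq with h | h
    · exact h
    · rw [← h] at ht; norm_num at ht
  have hbase : ∀ r ∈ Icc (6/5) t, 1 ≤ r ^ 3 * (2 - r) := by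
    intro r hr
    rcases hr.2.lt_or_eq with h | h
    · by_contra hcon
      have : t ≤ r := hmin ⟨⟨hr.1, hr.2.trans ht2⟩, (not_le.mp hcon).le⟩
      linarith
    · rw [h]; exact ht.ge
  let P : ℕ → ℝ × ℝ → Prop := fun n q => q.1 < q.2 ∧ (∀ r ∈ Icc q.1 q.2, pH n r 0 < 0) ∧
    0 ≤ pH (n + 1) q.1 0 ∧ pH (n + 1) q.2 0 = pH n q.2 0
  have hstep : ∀ n (q : {q : ℝ × ℝ // P n q}), ∃ q' : {q : ℝ × ℝ // P (n + 1) q},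
      q.1.1 ≤ q'.1.1 ∧ q'.1.2 ≤ q.1.2 ∧
      ∀ r ∈ Icc q'.1.1 q'.1.2, pH n r ((pH (n + 1) r 0) ^ 2) ≤ pH (n + 1) r 0 := by
    rintro n ⟨⟨s, t⟩, h1, h2, h3, h4⟩
    obtain ⟨s', t', a, b, c, d, e, f⟩ := stepA n s t h1 h2 h3 h4
    exact ⟨⟨(s', t'), c, fun r hr => (d r hr).1, e, f⟩, a, b, fun r hr => (d r hr).2⟩
  choose N hN1 hN2 hN3 using hstep
  have hP0 : P 0 (6/5, t) := by
    refine ⟨hlt, ?_, ?_, ?_⟩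
    · intro r hr
      simp only [pH]
      have := hr.1
      simp only at this
      nlinarith
    · simp only [pH]; norm_num
    · simp only [pH]
      have h0 : t * (2 - t) * t ^ 2 = 1 := by linarith
      have : t * (1 - (1 - t * (1 - 0) ^ 2) ^ 2) ^ 2 = (t ^ 3 * (2 - t)) * (2 - t) := by ring
      linear_combination this + (2 - t) * ht
  let S : (n : ℕ) → {q : ℝ × ℝ // P n q} := fun n => Nat.rec ⟨_, hP0⟩ (fun n q => N n q) n
  have hS : ∀ n, S (n + 1) = N n (S n) := fun n => rfl
  have hsub : ∀ n, Icc (S (n + 1)).1.1 (S (n + 1)).1.2 ⊆ Icc (S n).1.1 (S n).1.2 := by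
    intro n
    rw [hS]
    exact Icc_subset_Icc (hN1 n _) (hN2 n _)
  obtain ⟨r, hr⟩ := IsCompact.nonempty_iInter_of_sequence_nonempty_isCompact_isClosed
    (fun n => Icc (S n).1.1 (S n).1.2) hsub
    (fun n => nonempty_Icc.mpr (S n).2.1.le) isCompact_Icc (fun n => isClosed_Icc)
  rw [mem_iInter] at hr
  have h0 : r ∈ Icc (6/5) t := hr 0
  refine ⟨r, h0.1, h0.2.trans ht2, hbase r h0, fun n => (S n).2.2.1 r (hr n), fun n => ?_⟩
  have := hr (n + 1)
  rw [hS] at this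
  exact hN3 n _ r this

open Filter Set

noncomputable def cr (a b c d : ℝ) : ℝ := ((d - a) * (c - b)) / ((b - a) * (d - c))

lemma cr_rev (a b c d : ℝ) : cr d c b a = cr a b c d := by
  unfold cr; congr 1 <;> ring

lemma cr_neg (a b c d : ℝ) : cr (-a) (-b) (-c) (-d) = cr a b c d := by
  unfold cr; congr 1 <;> ring

lemma cr_sq {a b c d : ℝ} (h0 : 0 ≤ a) (h1 : a < b) (h2 : b < c) (h3 : c < d) :
    cr a b c d ≤ cr (a ^ 2) (b ^ 2) (c ^ 2) (d ^ 2) := by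
  unfold cr
  have e1 : (d ^ 2 - a ^ 2) * (c ^ 2 - b ^ 2) = ((d - a) * (c - b)) * ((d + a) * (c + b)) := by ring
  have e2 : (b ^ 2 - a ^ 2) * (d ^ 2 - c ^ 2) = ((b - a) * (d - c)) * ((b + a) * (d + c)) := by ring
  have p1 : 0 < (d - a) * (c - b) := mul_pos (by linarith) (by linarith)
  have p2 : 0 < (b - a) * (d - c) := mul_pos (by linarith) (by linarith)
  have p3 : 0 < (b + a) * (d + c) := mul_pos (by linarith) (by linarith)
  have e3 : (b + a) * (d + c) ≤ (d + a) * (c + b) := by nlinarith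
  rw [e1, e2, div_le_div_iff₀ p2 (mul_pos p2 p3)]
  have := mul_le_mul_of_nonneg_left e3 (mul_pos p1 p2).le
  nlinarith

lemma cr_sq_neg {a b c d : ℝ} (h0 : d ≤ 0) (h1 : a < b) (h2 : b < c) (h3 : c < d) :
    cr a b c d ≤ cr (a ^ 2) (b ^ 2) (c ^ 2) (d ^ 2) := by
  have := @cr_sq (-d) (-c) (-b) (-a) (by linarith) (by linarith) (by linarith) (by linarith)
  rw [cr_neg, cr_rev a b c d] at this
  simp only [neg_sq] at this
  rwa [cr_rev (a ^ 2)] at this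

def CrExp (h : ℝ → ℝ) (I : Set ℝ) : Prop :=
  ∀ a b c d, a ∈ I → d ∈ I → a < b → b < c → c < d → cr a b c d ≤ cr (h a) (h b) (h c) (h d)

structure Lvl (h : ℝ → ℝ) (b : ℝ) : Prop where
  cont : Continuous h
  bpos : 0 < b
  fix : h (b ^ 2) = b
  neg : h 0 < 0
  ge : -b ≤ h 0
  ex : ∃ s Z, 0 < s ∧ b < Z ∧ StrictMonoOn h (Icc (-s) (Z ^ 2)) ∧ CrExp h (Icc (-s) (Z ^ 2)) ∧
    h (-s) ≤ -(11/10) * b ∧ Z ≤ h (Z ^ 2)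

lemma Lvl.mono {h b} (L : Lvl h b) : StrictMonoOn h (Icc 0 (b ^ 2)) := by
  obtain ⟨s, Z, hs, hZ, hm, -⟩ := L.ex
  have := L.bpos
  exact hm.mono (Icc_subset_Icc (by linarith) (by nlinarith))

lemma pH0_mono {r : ℝ} (hr : 0 < r) : StrictMonoOn (pH 0 r) (Icc (-1) 1) := by
  intro x hx y hy hxy
  change 1 - r * (1 - x) ^ 2 < 1 - r * (1 - y) ^ 2
  have := mul_pos hr (sub_pos.mpr hxy)
  nlinarith [hx.1, hx.2, hy.1, hy.2]

lemma pH0_cr {r : ℝ} (hr : 0 < r) : CrExp (pH 0 r) (Icc (-1) 1) := by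
  intro a b c d ha hd h1 h2 h3
  have := @cr_sq_neg (a - 1) (b - 1) (c - 1) (d - 1) (by linarith [hd.2]) (by linarith) (by linarith) (by linarith)
  have e : cr (a-1) (b-1) (c-1) (d-1) = cr a b c d := by unfold cr; congr 1 <;> ring
  have e2 : cr (pH 0 r a) (pH 0 r b) (pH 0 r c) (pH 0 r d) =
      cr ((a-1)^2) ((b-1)^2) ((c-1)^2) ((d-1)^2) := by
    unfold cr
    have : ∀ x, pH 0 r x = 1 - r * (1 - x) ^ 2 := fun _ => rfl
    simp only [this]
    rw [← mul_div_mul_left (((d - 1) ^ 2 - (a - 1) ^ 2) * _) _ (pow_ne_zero 2 hr.ne')]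
    congr 1 <;> ring
  rw [e2, ← e]; exact this

lemma lvl_base {r : ℝ} (h1 : 6/5 ≤ r) (h2 : r ≤ 2) (h3 : 1 ≤ r ^ 3 * (2 - r)) :
    ∃ b, b < 1 ∧ Lvl (pH 0 r) b := by
  have hc : ContinuousOn (fun x : ℝ => r * (1 - x) * (1 + x) ^ 2) (Icc 0.62 1) := by fun_prop
  obtain ⟨b, hb, hbe⟩ := intermediate_value_Icc' (by norm_num) hc
    (show (1:ℝ) ∈ Icc _ _ from ⟨by norm_num, by norm_num; nlinarith⟩)
  simp only at hbe
  have hb1 : b < 1 := by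
    rcases hb.2.lt_or_eq with h | h
    · exact h
    · rw [h] at hbe; norm_num at hbe
  have hb0 : 0.62 ≤ b := hb.1
  have hv : ∀ u, pH 0 r u = 1 - r * (1 - u) ^ 2 := fun _ => rfl
  refine ⟨b, hb1, ⟨by simp only [funext hv]; fun_prop, by linarith, ?_, ?_, ?_, 1, 1, one_pos, hb1, ?_, ?_, ?_, ?_⟩⟩
  · rw [hv]
    have : r * (1 - b ^ 2) ^ 2 = (r * (1 - b) * (1 + b) ^ 2) * (1 - b) := by ring
    rw [this, hbe]; ring
  · rw [hv]; linarith
  · rw [hv]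
    by_contra hcon
    have hx : b < r - 1 := by linarith [not_le.mp hcon]
    set x := r - 1
    have e : r * (1 - x) * (1 + x) ^ 2 = r ^ 3 * (2 - r) := by simp only [x]; ring
    have e2 : r * (1 - x) * (1 + x) ^ 2 - r * (1 - b) * (1 + b) ^ 2
      = (r * (x - b)) * (1 - (x + b) - (x ^ 2 + x * b + b ^ 2)) := by ring
    have p1 : 0 < r * (x - b) := mul_pos (by linarith) (by linarith)
    have p2 : 1 - (x + b) - (x ^ 2 + x * b + b ^ 2) < 0 := by nlinarith
    nlinarith
  · simpa using pH0_mono (by linarith : 0 < r)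
  · simpa using pH0_cr (by linarith : 0 < r)
  · rw [hv]; nlinarith
  · rw [hv]; norm_num

lemma Lvl.below {h b} (L : Lvl h b) {x : ℝ} (hx : 0 ≤ x) (hxb : x < b) : h (x ^ 2) < x := by
  rcases hx.eq_or_lt with rfl | hx0
  · simpa using L.neg
  by_contra hcon
  have hcon := not_lt.mp hcon
  obtain ⟨s, Z, hs, hZ, hm, hcr, -, hZ'⟩ := L.ex
  have hb := L.bpos
  have hn := L.neg
  have c1 := @cr_sq 0 x b Z le_rfl hx0 hxb hZ
  have q1 : x ^ 2 < b ^ 2 := by nlinarith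
  have q2 : b ^ 2 < Z ^ 2 := by nlinarith
  have q0 : 0 < x ^ 2 := by positivity
  have c2 := hcr 0 (x ^ 2) (b ^ 2) (Z ^ 2) ⟨by linarith, by positivity⟩ ⟨by linarith [sq_nonneg Z], le_rfl⟩ q0 q1 q2
  have mx : h (x ^ 2) < b := by
    have := hm (a := x ^ 2) (b := b ^ 2) ⟨by linarith, by linarith⟩ ⟨by linarith, by linarith⟩ q1
    rwa [L.fix] at this
  rw [zero_pow two_ne_zero] at c1
  have c3 := c1.trans c2
  rw [L.fix] at c3
  unfold cr at c3
  set X := h (x ^ 2)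
  set Z' := h (Z ^ 2)
  obtain ⟨w, hw⟩ : ∃ w, w = - h 0 := ⟨_, rfl⟩
  have hw0 : 0 < w := by linarith
  have e0 : h 0 = -w := by linarith
  rw [e0] at c3
  have k1 : (Z' - -w) / (Z' - b) ≤ (Z + w) / (Z - b) := by
    rw [div_le_div_iff₀ (by linarith) (by linarith)]; nlinarith
  have k2 : (b - X) / (X - -w) ≤ (b - x) / (x + w) := by
    rw [div_le_div_iff₀ (by linarith) (by linarith)]; nlinarith
  have k3 := mul_le_mul k1 k2 (div_nonneg (by linarith) (by linarith)) (div_nonneg (by linarith) (by linarith))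
  have e4 : (Z' - -w) / (Z' - b) * ((b - X) / (X - -w)) = (Z' - -w) * (b - X) / ((X - -w) * (Z' - b)) := by
    rw [div_mul_div_comm]; congr 1; ring
  rw [e4] at k3
  have k4 := c3.trans k3
  rw [div_mul_div_comm, div_le_div_iff₀ (mul_pos (by linarith) (by linarith)) (mul_pos (by linarith) (by linarith))] at k4
  have e5 : (Z - 0) * (b - x) * ((Z - b) * (x + w)) - (Z + w) * (b - x) * ((x - 0) * (Z - b))
    = ((b - x) * (Z - b)) * (w * (Z - x)) := by ring
  have := mul_pos (mul_pos (sub_pos.mpr hxb) (sub_pos.mpr hZ)) (mul_pos hw0 (by linarith : 0 < Z - x))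
  linarith

set_option maxHeartbeats 1000000 in
lemma Lvl.step {h b} (L : Lvl h b) (h1 : - h ((h 0) ^ 2) < 0)
    (h2 : h ((h ((h 0) ^ 2)) ^ 2) ≤ - h ((h 0) ^ 2)) :
    ∃ b', Lvl (fun u => - h ((h u) ^ 2)) b' ∧ b' < b ∧ 11/10 * b' ≤ - h 0 ∧ - h 0 < b ∧
      h (b' ^ 2) = - b' := by
  obtain ⟨s, Z, hs, hZ, hm, hcr, hsb, hZ'⟩ := L.ex
  have hb := L.bpos
  have hn := L.neg
  have hge := L.ge
  have hc := L.cont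
  have M := L.mono
  obtain ⟨w, hw⟩ : ∃ w, w = - h 0 := ⟨_, rfl⟩
  have e0 : h 0 = -w := by linarith
  rw [e0] at hn hge h1 h2
  simp only [neg_sq] at h1 h2
  simp only [e0, neg_sq, neg_neg]
  have hw0 : 0 < w := by linarith
  have hwb : w ≤ b := by linarith
  obtain ⟨w', hw'⟩ : ∃ w', w' = h (w ^ 2) := ⟨_, rfl⟩
  rw [← hw'] at h1 h2
  have hw'0 : 0 < w' := by linarith
  have hmem : ∀ x, 0 ≤ x → x ≤ b → x ^ 2 ∈ Icc 0 (b ^ 2) := fun x a1 a2 => ⟨sq_nonneg x, by nlinarith⟩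
  have hlt : ∀ x y, 0 ≤ x → x < y → y ≤ b → h (x ^ 2) < h (y ^ 2) := fun x y a1 a2 a3 =>
    M (hmem x a1 (by linarith)) (hmem y (by linarith) a3) (by nlinarith)
  have hle : ∀ x y, 0 ≤ x → x ≤ y → y ≤ b → h (x ^ 2) ≤ h (y ^ 2) := fun x y a1 a2 a3 =>
    M.monotoneOn (hmem x a1 (by linarith)) (hmem y (by linarith) a3) (by nlinarith)
  have hw'b : w' ≤ b := by
    have := hle w b hw0.le hwb le_rfl
    rwa [L.fix, ← hw'] at this
  obtain ⟨b', hb', hbe⟩ := intermediate_value_Ioo hb.le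
    (show ContinuousOn (fun x => h (x ^ 2) + x) (Icc 0 b) by fun_prop)
    (show (0:ℝ) ∈ Ioo _ _ from ⟨by simp [e0, hw0], by simp only [L.fix]; linarith⟩)
  simp only at hbe
  obtain ⟨hb'0, hb'b⟩ := hb'
  have hbe : h (b' ^ 2) = - b' := by linarith
  have hw'b' : w' ≤ b' := by
    by_contra hcon
    have := hlt b' w' hb'0.le (not_le.mp hcon) hw'b
    linarith
  have hwb' : w < b := by
    rcases hwb.lt_or_eq with h | h
    · exact h
    · rw [h, L.fix] at hw'; linarith
  have hb'w : b' < w := by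
    by_contra hcon
    have := hle w b' hw0.le (not_lt.mp hcon) hb'b.le
    linarith
  have hB : 11/10 * b' ≤ w := by
    by_contra hcon
    have hcon := not_le.mp hcon
    have c := hcr (-s) 0 (b' ^ 2) (w ^ 2) ⟨le_rfl, by nlinarith⟩ ⟨by nlinarith, by nlinarith⟩ (by linarith) (by positivity) (by nlinarith)
    rw [hbe, ← hw', e0] at c
    obtain ⟨l, hl⟩ : ∃ l, l = - h (-s) := ⟨_, rfl⟩
    rw [show h (-s) = - l by linarith] at c
    have hl' : 11/10 * w ≤ l := by linarith
    unfold cr at c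
    have p1 : 0 < w ^ 2 - b' ^ 2 := by nlinarith
    have p2 : w ^ 2 - b' ^ 2 < 1/4 * b' ^ 2 := by nlinarith
    have p3 : w' + l ≤ 21 * (l - w) := by linarith
    have p4 : w - b' ≤ 1/10 * (w' + b') := by linarith
    have hL : 4 < (w ^ 2 - -s) * (b' ^ 2 - 0) / ((0 - -s) * (w ^ 2 - b' ^ 2)) := by
      rw [lt_div_iff₀ (mul_pos (by linarith) p1)]
      have := mul_lt_mul_of_pos_left p2 hs
      nlinarith [mul_pos (pow_pos hw0 2) (pow_pos hb'0 2)]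
    have hR : (w' - -l) * (-b' - -w) / ((-w - -l) * (w' - -b')) ≤ 3 := by
      rw [div_le_iff₀ (mul_pos (by linarith) (by linarith))]
      have := mul_le_mul p3 p4 (by linarith) (by linarith)
      have q := mul_pos (by linarith : 0 < l - w) (by linarith : 0 < w' + b')
      nlinarith
    linarith
  -- s'
  obtain ⟨s1, hs1, hs1e⟩ := intermediate_value_Icc (by linarith : -s ≤ 0) hc.continuousOn
    (show -b ∈ Icc _ _ from ⟨by linarith, by linarith⟩)
  have hs10 : s1 < 0 := by
    rcases hs1.2.lt_or_eq with h | h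
    · exact h
    · rw [h] at hs1e; linarith
  obtain ⟨ζ, hζ, hζe⟩ := intermediate_value_Ioo (by nlinarith : b' ^ 2 ≤ w ^ 2) hc.continuousOn
    (show (0:ℝ) ∈ Ioo _ _ from ⟨by linarith, by linarith⟩)
  have hζ0 : 0 < ζ := lt_trans (by positivity) hζ.1
  have hz2 : (√ζ) ^ 2 = ζ := Real.sq_sqrt hζ0.le
  have hζZ : ζ ≤ Z ^ 2 := by have a1 := hζ.2; nlinarith only [a1, hwb, hZ, hb, hw0]
  have hb2Z : b ^ 2 ≤ Z ^ 2 := by nlinarith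
  have hmap : ∀ x ∈ Icc s1 ζ, h x ∈ Icc (-b) 0 := by
    intro x hx
    constructor
    · rw [← hs1e]
      exact hm.monotoneOn ⟨hs1.1, by linarith⟩ ⟨by linarith [hx.1, hs1.1], by linarith [hx.2]⟩ hx.1
    · rw [← hζe]
      exact hm.monotoneOn ⟨by linarith [hx.1, hs1.1], by linarith [hx.2]⟩ ⟨by linarith, by linarith⟩ hx.2
  have hsub : Icc s1 ζ ⊆ Icc (-s) (Z ^ 2) := Icc_subset_Icc hs1.1 hζZ
  have hsq : ∀ x ∈ Icc s1 ζ, (h x) ^ 2 ∈ Icc 0 (b ^ 2) := fun x hx =>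
    ⟨sq_nonneg _, by have := hmap x hx; nlinarith [this.1, this.2]⟩
  have hbs : Icc 0 (b ^ 2) ⊆ Icc (-s) (Z ^ 2) := Icc_subset_Icc (by linarith) hb2Z
  have hinc := hm.mono hsub
  have hsqlt : ∀ x ∈ Icc s1 ζ, ∀ y ∈ Icc s1 ζ, x < y → (h y) ^ 2 < (h x) ^ 2 := by
    intro x hx y hy hxy
    have := hinc hx hy hxy
    have h0y := (hmap y hy).2
    nlinarith only [this, h0y]
  refine ⟨b', ⟨by fun_prop, hb'0, ?_, ?_, ?_, -s1, √ζ, by linarith, ?_, ?_, ?_, ?_, ?_⟩, hb'b, hB, hwb', hbe⟩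
  · rw [hbe, neg_sq, hbe, neg_neg]
  · simp only [e0, neg_sq, ← hw']; linarith
  · simp only [e0, neg_sq, ← hw']; linarith
  · exact Real.lt_sqrt_of_sq_lt hζ.1
  · rw [hz2, neg_neg]
    intro x hx y hy hxy
    have := M (hsq y hy) (hsq x hx) (hsqlt x hx y hy hxy)
    simp only; linarith
  · rw [hz2, neg_neg]
    intro x0 x1 x2 x3 hx0 hx3 h01 h12 h23
    have hx1 : x1 ∈ Icc s1 ζ := ⟨by linarith [hx0.1], by linarith [hx3.2]⟩
    have hx2 : x2 ∈ Icc s1 ζ := ⟨by linarith [hx0.1], by linarith [hx3.2]⟩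
    refine (hcr x0 x1 x2 x3 (hsub hx0) (hsub hx3) h01 h12 h23).trans ?_
    refine (cr_sq_neg (hmap _ hx3).2 (hinc hx0 hx1 h01) (hinc hx1 hx2 h12) (hinc hx2 hx3 h23)).trans ?_
    rw [cr_neg, ← cr_rev, ← cr_rev (h _)]
    exact hcr _ _ _ _ (hbs (hsq _ hx3)) (hbs (hsq _ hx0)) (hsqlt _ hx2 _ hx3 h23) (hsqlt _ hx1 _ hx2 h12)
      (hsqlt _ hx0 _ hx1 h01)
  · simp only [neg_neg, hs1e, neg_sq, L.fix]; linarith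
  · simp only [hz2, hζe]
    rw [zero_pow two_ne_zero, e0, neg_neg]
    exact (Real.sqrt_le_left hw0.le).2 hζ.2.le

structure Tower (r : ℝ) (b : ℕ → ℝ) : Prop where
  r1 : 6/5 ≤ r
  r2 : r ≤ 2
  lvl : ∀ n, Lvl (pH n r) (b n)
  b01 : b 0 < 1
  bw : ∀ n, 11/10 * b (n + 1) ≤ - pH n r 0
  wb : ∀ n, - pH n r 0 < b n
  fl : ∀ n, pH n r ((b (n + 1)) ^ 2) = - b (n + 1)

lemma exists_tower : ∃ r b, Tower r b := by
  obtain ⟨r, h1, h2, h3, h4, h5⟩ := exists_param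
  obtain ⟨b0, hb0, L0⟩ := lvl_base h1 h2 h3
  have key : ∀ n b, Lvl (pH n r) b → ∃ b', Lvl (pH (n + 1) r) b' ∧ b' < b ∧ 11/10 * b' ≤ - pH n r 0 ∧ - pH n r 0 < b ∧
      pH n r (b' ^ 2) = - b' := by
    intro n b L
    exact L.step (h4 (n + 1)) (by
      have := h5 n
      have e : pH (n + 1) r 0 = - pH n r ((pH n r 0) ^ 2) := rfl
      rw [e, neg_sq] at this
      exact this)
  let B : (n : ℕ) → {b : ℝ // Lvl (pH n r) b} := fun n => Nat.rec ⟨b0, L0⟩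
    (fun n x => ⟨(key n x.1 x.2).choose, (key n x.1 x.2).choose_spec.1⟩) n
  have hB : ∀ n, _ := fun n => (key n (B n).1 (B n).2).choose_spec
  exact ⟨r, fun n => (B n).1, ⟨h1, h2, fun n => (B n).2, hb0, fun n => (hB n).2.2.1,
    fun n => (hB n).2.2.2.1, fun n => (hB n).2.2.2.2⟩⟩

open Filter Set

def pp (r x : ℝ) : ℝ := 1 - r * (1 - x ^ 2) ^ 2

lemma pp_eq (r x : ℝ) : pp r x = pH 0 r (x ^ 2) := rfl

lemma pp_abs (r x : ℝ) : pp r |x| = pp r x := by simp [pp]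

lemma pp_cont (r : ℝ) : Continuous (pp r) := by unfold pp; fun_prop

lemma pp_iter_cont (r : ℝ) (k : ℕ) : Continuous ((pp r)^[k]) := (pp_cont r).iterate k

lemma pp_iter_abs (r x : ℝ) {k : ℕ} (hk : 1 ≤ k) : (pp r)^[k] |x| = (pp r)^[k] x := by
  obtain ⟨m, rfl⟩ : ∃ m, k = m + 1 := ⟨k - 1, by omega⟩
  rw [Function.iterate_succ_apply, Function.iterate_succ_apply, pp_abs]

lemma pp_iter_abs_sub (r x y : ℝ) {k : ℕ} (hk : 1 ≤ k) (h : |x| = |y|) : (pp r)^[k] x = (pp r)^[k] y := by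
  rw [← pp_iter_abs r x hk, h, pp_iter_abs r y hk]

lemma pp_pow (r x : ℝ) (n : ℕ) : (pp r)^[2 ^ n] x = (-1) ^ n * pH n r (x ^ 2) := by
  induction n generalizing x with
  | zero => simp [pp_eq]
  | succ n ih =>
    rw [pow_succ, mul_two, Function.iterate_add_apply, ih x, ih, mul_pow, ← pow_mul, mul_comm n 2, pow_mul]
    have : pH (n + 1) r (x ^ 2) = - pH n r ((pH n r (x ^ 2)) ^ 2) := rfl
    rw [this]; norm_num; ring

lemma pp_pow_abs (r x : ℝ) (n : ℕ) : |(pp r)^[2 ^ n] x| = |pH n r (x ^ 2)| := by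
  rw [pp_pow, abs_mul, abs_pow, abs_neg, abs_one, one_pow, one_mul]

namespace Tower
variable {r : ℝ} {b : ℕ → ℝ}

lemma bpos (T : Tower r b) (n : ℕ) : 0 < b n := (T.lvl n).bpos

lemma wpos (T : Tower r b) (n : ℕ) : 0 < - pH n r 0 := by linarith [(T.lvl n).neg]

lemma blt (T : Tower r b) (n : ℕ) : 11/10 * b (n + 1) < b n := (T.bw n).trans_lt (T.wb n)

lemma blt' (T : Tower r b) (n : ℕ) : b (n + 1) < b n := by linarith [T.blt n, T.bpos (n + 1)]

lemma blt1 (T : Tower r b) (n : ℕ) : b n < 1 := by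
  induction n with
  | zero => exact T.b01
  | succ n ih => exact (T.blt' n).trans ih

lemma b_le0 (T : Tower r b) (n : ℕ) : b n ≤ b 0 := by
  induction n with
  | zero => exact le_rfl
  | succ n ih => exact (T.blt' n).le.trans ih

lemma b_bound (T : Tower r b) (n : ℕ) : b n ≤ (10/11) ^ n := by
  induction n with
  | zero => simpa using T.b01.le
  | succ n ih => rw [pow_succ]; linarith [T.blt n]

lemma b_tendsto (T : Tower r b) : Tendsto b atTop (nhds 0) :=
  squeeze_zero (fun n => (T.bpos n).le) T.b_bound
    (tendsto_pow_atTop_nhds_zero_of_lt_one (by norm_num) (by norm_num))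

lemma wsucc (T : Tower r b) (n : ℕ) : - pH (n + 1) r 0 = pH n r ((- pH n r 0) ^ 2) := by
  change - - pH n r ((pH n r 0) ^ 2) = _
  rw [neg_neg, neg_sq]

lemma b'w (T : Tower r b) (n : ℕ) : b (n + 1) < - pH n r 0 := by linarith [T.bw n, T.bpos (n + 1)]

lemma w'w (T : Tower r b) (n : ℕ) : - pH (n + 1) r 0 < - pH n r 0 := (T.wb (n + 1)).trans (T.b'w n)

lemma hle (T : Tower r b) (n : ℕ) {x y : ℝ} (hx : |x| ≤ |y|) (hy : |y| ≤ b n) :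
    pH n r (x ^ 2) ≤ pH n r (y ^ 2) := by
  have h1 : x ^ 2 ≤ y ^ 2 := sq_le_sq.mpr hx
  have h2 : y ^ 2 ≤ b n ^ 2 := sq_le_sq.mpr (by rwa [abs_of_pos (T.bpos n)])
  exact (T.lvl n).mono.monotoneOn ⟨sq_nonneg _, h1.trans h2⟩ ⟨sq_nonneg _, h2⟩ h1

/-- `p^{2^n}` preserves `[-w_n, w_n]`. -/
lemma ret_w (T : Tower r b) (n : ℕ) {x : ℝ} (hx : |x| ≤ - pH n r 0) : |(pp r)^[2 ^ n] x| ≤ - pH n r 0 := by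
  rw [pp_pow_abs, abs_le]
  have hw := T.wpos n
  have h1 := T.hle n (x := x) (y := - pH n r 0) (by rwa [abs_of_pos hw]) (by rw [abs_of_pos hw]; exact (T.wb n).le)
  have h2 := T.hle n (x := 0) (y := x) (by simp) (hx.trans (T.wb n).le)
  rw [← T.wsucc] at h1
  rw [zero_pow two_ne_zero] at h2
  constructor <;> linarith [T.w'w n]

/-- `p^{2^n}` maps `[-b_{n+1}, b_{n+1}]` into `b_{n+1} ≤ |y| ≤ w_n`, with fixed sign. -/
lemma ret_b' (T : Tower r b) (n : ℕ) {x : ℝ} (hx : |x| ≤ b (n + 1)) :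
    - pH n r 0 ≥ - pH n r (x ^ 2) ∧ - pH n r (x ^ 2) ≥ b (n + 1) := by
  have hb := T.bpos (n + 1)
  have h1 := T.hle n (x := x) (y := b (n + 1)) (by rwa [abs_of_pos hb]) (by rw [abs_of_pos hb]; exact (T.blt' n).le)
  have h2 := T.hle n (x := 0) (y := x) (by simp) (hx.trans (T.blt' n).le)
  rw [T.fl] at h1
  rw [zero_pow two_ne_zero] at h2
  constructor <;> linarith

lemma ret_b (T : Tower r b) (n : ℕ) {x : ℝ} (hx : |x| ≤ b (n + 1)) :
    b (n + 1) ≤ |(pp r)^[2 ^ n] x| ∧ |(pp r)^[2 ^ n] x| ≤ - pH n r 0 := by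
  have h := T.ret_b' n hx
  rw [pp_pow_abs, ← abs_neg, abs_of_pos (by linarith [T.bpos (n + 1)])]
  exact ⟨h.2, h.1⟩

lemma sgn (T : Tower r b) (n : ℕ) : ∀ k, 1 ≤ k → k < 2 ^ n →
    (∀ x ∈ Icc 0 (b n), 0 < (pp r)^[k] x) ∨ (∀ x ∈ Icc 0 (b n), (pp r)^[k] x < 0) := by
  induction n with
  | zero => intro k h1 h2; simp at h2; omega
  | succ n ih =>
    intro k h1 h2
    have hsub : Icc 0 (b (n + 1)) ⊆ Icc 0 (b n) := Icc_subset_Icc le_rfl (T.blt' n).le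
    rcases lt_trichotomy k (2 ^ n) with h | h | h
    · rcases ih k h1 h with h | h
      · left; exact fun x hx => h x (hsub hx)
      · right; exact fun x hx => h x (hsub hx)
    · subst h
      have key : ∀ x ∈ Icc 0 (b (n + 1)), pH n r (x ^ 2) < 0 := fun x hx => by
        have := (T.ret_b' n (x := x) (by rw [abs_of_nonneg hx.1]; exact hx.2)).2
        linarith [T.bpos (n + 1)]
      rcases neg_one_pow_eq_or ℝ n with e | e
      · right; intro x hx; rw [pp_pow, e]; linarith [key x hx]
      · left; intro x hx; rw [pp_pow, e]; linarith [key x hx]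
    · obtain ⟨j, rfl⟩ : ∃ j, k = j + 2 ^ n := ⟨k - 2 ^ n, by omega⟩
      have hj : 1 ≤ j := by omega
      have hj2 : j < 2 ^ n := by rw [pow_succ] at h2; omega
      have key : ∀ x ∈ Icc 0 (b (n + 1)), |(pp r)^[2 ^ n] x| ∈ Icc 0 (b n) := fun x hx => by
        have := (T.ret_b n (x := x) (by rw [abs_of_nonneg hx.1]; exact hx.2)).2
        exact ⟨abs_nonneg _, this.trans (T.wb n).le⟩
      rcases ih j hj hj2 with h | h
      · left; intro x hx
        rw [Function.iterate_add_apply, ← pp_iter_abs _ _ hj]; exact h _ (key x hx)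
      · right; intro x hx
        rw [Function.iterate_add_apply, ← pp_iter_abs _ _ hj]; exact h _ (key x hx)

lemma pp_maps (T : Tower r b) {x : ℝ} (hx : x ∈ Icc (-1) 1) : pp r x ∈ Icc (-1) 1 := by
  have h1 := T.r1
  have h2 := T.r2
  have a : 0 ≤ (1 - x ^ 2) := by nlinarith [hx.1, hx.2]
  have a' : (1 - x ^ 2) ≤ 1 := by nlinarith [hx.1, hx.2]
  have c : (1 - x ^ 2) ^ 2 ≤ 1 := by nlinarith
  unfold pp
  constructor <;> nlinarith [sq_nonneg (1 - x ^ 2)]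

lemma pp_iter_maps (T : Tower r b) (k : ℕ) {x : ℝ} (hx : x ∈ Icc (-1) 1) : (pp r)^[k] x ∈ Icc (-1) 1 := by
  induction k with
  | zero => exact hx
  | succ k ih => rw [Function.iterate_succ_apply']; exact T.pp_maps ih

lemma pp_mono (T : Tower r b) : StrictMonoOn (pp r) (Icc 0 1) := by
  intro x hx y hy hxy
  rw [pp_eq, pp_eq]
  exact pH0_mono (by linarith [T.r1]) ⟨by nlinarith [hx.1], by nlinarith [hx.1, hx.2]⟩
    ⟨by nlinarith [hy.1], by nlinarith [hy.1, hy.2]⟩ (by nlinarith [hx.1])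

lemma pp_anti (T : Tower r b) : StrictAntiOn (pp r) (Icc (-1) 0) := by
  intro x hx y hy hxy
  have hy' : -y ∈ Icc (0:ℝ) 1 := ⟨by linarith [hy.2], by linarith [hy.1]⟩
  have hx' : -x ∈ Icc (0:ℝ) 1 := ⟨by linarith [hx.2], by linarith [hx.1]⟩
  have := T.pp_mono hy' hx' (by linarith)
  simpa [pp] using this

lemma pp_cr (T : Tower r b) {x0 x1 x2 x3 : ℝ} (h0 : 0 ≤ x0) (h01 : x0 < x1) (h12 : x1 < x2) (h23 : x2 < x3)
    (h3 : x3 ≤ 1) : cr x0 x1 x2 x3 ≤ cr (pp r x0) (pp r x1) (pp r x2) (pp r x3) := by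
  refine (cr_sq h0 h01 h12 h23).trans ?_
  simp only [pp_eq]
  apply pH0_cr (by linarith [T.r1])
  · constructor <;> nlinarith
  · constructor <;> nlinarith
  all_goals nlinarith

lemma pp_cr_neg (T : Tower r b) {x0 x1 x2 x3 : ℝ} (h0 : -1 ≤ x0) (h01 : x0 < x1) (h12 : x1 < x2) (h23 : x2 < x3)
    (h3 : x3 ≤ 0) : cr x0 x1 x2 x3 ≤ cr (pp r x0) (pp r x1) (pp r x2) (pp r x3) := by
  have := T.pp_cr (x0 := -x3) (x1 := -x2) (x2 := -x1) (x3 := -x0) (by linarith) (by linarith) (by linarith) (by linarith) (by linarith)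
  rw [cr_neg, cr_rev x0 x1 x2 x3] at this
  refine this.trans (le_of_eq ?_)
  rw [cr_rev]
  simp [pp]

lemma Icc_sub (T : Tower r b) (n : ℕ) : Icc 0 (b n) ⊆ Icc (-1) 1 :=
  Icc_subset_Icc (by linarith) (T.blt1 n).le

/-- for `k < 2^n`, the image of `[0,b_n]` lies in `[0,1]` or `[-1,0]`. -/
lemma side (T : Tower r b) (n k : ℕ) (hk : k < 2 ^ n) :
    (∀ x ∈ Icc 0 (b n), (pp r)^[k] x ∈ Icc 0 1) ∨ (∀ x ∈ Icc 0 (b n), (pp r)^[k] x ∈ Icc (-1) 0) := by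
  rcases Nat.eq_zero_or_pos k with rfl | h
  · left; exact fun x hx => ⟨hx.1, hx.2.trans (T.blt1 n).le⟩
  · rcases T.sgn n k h hk with h | h
    · left; exact fun x hx => ⟨(h x hx).le, (T.pp_iter_maps k (T.Icc_sub n hx)).2⟩
    · right; exact fun x hx => ⟨(T.pp_iter_maps k (T.Icc_sub n hx)).1, (h x hx).le⟩

lemma mon (T : Tower r b) (n k : ℕ) (hk : k ≤ 2 ^ n) :
    StrictMonoOn ((pp r)^[k]) (Icc 0 (b n)) ∨ StrictAntiOn ((pp r)^[k]) (Icc 0 (b n)) := by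
  induction k with
  | zero => left; intro x _ y _ h; exact h
  | succ k ih =>
    rw [Function.iterate_succ']
    rcases T.side n k (by omega) with s | s <;> rcases ih (by omega) with m | m
    · left; exact T.pp_mono.comp m s
    · right; exact T.pp_mono.comp_strictAntiOn m s
    · right; exact T.pp_anti.comp_strictMonoOn m s
    · left; exact T.pp_anti.comp m s

lemma inj (T : Tower r b) (n k : ℕ) (hk : k ≤ 2 ^ n) : InjOn ((pp r)^[k]) (Icc 0 (b n)) := by
  rcases T.mon n k hk with h | h
  · exact h.injOn
  · exact h.injOn

lemma crs (T : Tower r b) (n k : ℕ) (hk : k < 2 ^ n) {x0 x1 x2 x3 : ℝ} (h0 : 0 ≤ x0) (h01 : x0 < x1)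
    (h12 : x1 < x2) (h23 : x2 < x3) (h3 : x3 ≤ b n) :
    cr ((pp r)^[k] x0) ((pp r)^[k] x1) ((pp r)^[k] x2) ((pp r)^[k] x3) ≤
    cr ((pp r)^[k+1] x0) ((pp r)^[k+1] x1) ((pp r)^[k+1] x2) ((pp r)^[k+1] x3) := by
  simp only [Function.iterate_succ_apply']
  have m0 : x0 ∈ Icc 0 (b n) := ⟨h0, by linarith⟩
  have m1 : x1 ∈ Icc 0 (b n) := ⟨by linarith, by linarith⟩
  have m2 : x2 ∈ Icc 0 (b n) := ⟨by linarith, by linarith⟩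
  have m3 : x3 ∈ Icc 0 (b n) := ⟨by linarith, by linarith⟩
  rcases T.side n k (by omega) with s | s <;> rcases T.mon n k (by omega) with m | m
  · exact T.pp_cr (s _ m0).1 (m m0 m1 h01) (m m1 m2 h12) (m m2 m3 h23) (s _ m3).2
  · rw [← cr_rev, ← cr_rev (pp r _)]
    exact T.pp_cr (s _ m3).1 (m m2 m3 h23) (m m1 m2 h12) (m m0 m1 h01) (s _ m0).2
  · exact T.pp_cr_neg (s _ m0).1 (m m0 m1 h01) (m m1 m2 h12) (m m2 m3 h23) (s _ m3).2
  · rw [← cr_rev, ← cr_rev (pp r _)]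
    exact T.pp_cr_neg (s _ m3).1 (m m2 m3 h23) (m m1 m2 h12) (m m0 m1 h01) (s _ m0).2

lemma crs_full (T : Tower r b) (n k : ℕ) (hk : k ≤ 2 ^ n) {x0 x1 x2 x3 : ℝ} (h0 : 0 ≤ x0) (h01 : x0 < x1)
    (h12 : x1 < x2) (h23 : x2 < x3) (h3 : x3 ≤ b n) :
    cr ((pp r)^[k] x0) ((pp r)^[k] x1) ((pp r)^[k] x2) ((pp r)^[k] x3) ≤
    cr ((pp r)^[2^n] x0) ((pp r)^[2^n] x1) ((pp r)^[2^n] x2) ((pp r)^[2^n] x3) := by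
  refine Nat.decreasingInduction' (P := fun k => cr ((pp r)^[k] x0) ((pp r)^[k] x1) ((pp r)^[k] x2) ((pp r)^[k] x3) ≤
    cr ((pp r)^[2^n] x0) ((pp r)^[2^n] x1) ((pp r)^[2^n] x2) ((pp r)^[2^n] x3)) ?_ hk le_rfl
  intro j hj _ ih
  exact (T.crs n j hj h0 h01 h12 h23 h3).trans ih

/-- size of pieces -/
noncomputable def LL (r : ℝ) (b : ℕ → ℝ) (n k : ℕ) : ℝ := |(pp r)^[k] (b n) - (pp r)^[k] 0|

lemma mon_abs (T : Tower r b) (n k : ℕ) (hk : k ≤ 2 ^ n) {x y : ℝ} (hx : 0 ≤ x) (hxy : x ≤ y) (hy : y ≤ b n) :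
    |(pp r)^[k] x - (pp r)^[k] 0| ≤ |(pp r)^[k] y - (pp r)^[k] 0| := by
  have m0 : (0:ℝ) ∈ Icc 0 (b n) := ⟨le_rfl, (T.bpos n).le⟩
  have m1 : x ∈ Icc 0 (b n) := ⟨by linarith, by linarith⟩
  have m2 : y ∈ Icc 0 (b n) := ⟨by linarith, by linarith⟩
  rcases T.mon n k hk with h | h
  · have a1 := h.monotoneOn m0 m1 hx
    have a2 := h.monotoneOn m1 m2 hxy
    rw [abs_of_nonneg (by linarith), abs_of_nonneg (by linarith)]; linarith
  · have a1 := h.antitoneOn m0 m1 hx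
    have a2 := h.antitoneOn m1 m2 hxy
    rw [abs_of_nonpos (by linarith), abs_of_nonpos (by linarith)]; linarith

lemma LL_dig0 (T : Tower r b) (n k : ℕ) (hk : k < 2 ^ n) : LL r b (n + 1) k ≤ LL r b n k :=
  T.mon_abs n k hk.le (T.bpos _).le (T.blt' n).le le_rfl

lemma LL_bound (T : Tower r b) (n k : ℕ) (hk : k < 2 ^ n) {x : ℝ} (hx : |x| ≤ b n) :
    |(pp r)^[k] x - (pp r)^[k] 0| ≤ LL r b n k := by
  rcases Nat.eq_zero_or_pos k with rfl | h
  · simp [LL]; rwa [abs_of_pos (T.bpos n)]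
  · rw [← pp_iter_abs r x h]
    exact T.mon_abs n k hk.le (abs_nonneg _) hx le_rfl

lemma contr_aux {y0 y1 y2 y3 : ℝ} (h01 : y0 < y1) (h12 : y1 < y2) (h23 : y2 < y3) (h : cr y0 y1 y2 y3 ≤ 440) :
    y2 - y1 ≤ 96/100 * (y3 - y0) := by
  unfold cr at h
  rw [div_le_iff₀ (mul_pos (by linarith) (by linarith))] at h
  by_contra hcon
  have hcon := not_le.mp hcon
  have a : (y1 - y0) * (y3 - y2) ≤ ((y3 - y0) - (y2 - y1)) ^ 2 := by nlinarith
  have hT : 0 < y3 - y0 := by linarith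
  set TT := y3 - y0
  set J := y2 - y1
  have hJ : J ≤ TT := by simp only [J, TT]; linarith
  nlinarith

lemma cr_bound (T : Tower r b) (n : ℕ) :
    cr ((pp r)^[2^n] 0) ((pp r)^[2^n] (b (n+1))) ((pp r)^[2^n] (- pH n r 0)) ((pp r)^[2^n] (b n)) ≤ 440 := by
  have e : cr ((pp r)^[2^n] 0) ((pp r)^[2^n] (b (n+1))) ((pp r)^[2^n] (- pH n r 0)) ((pp r)^[2^n] (b n)) =
     cr (pH n r 0) (- b (n+1)) (- pH (n+1) r 0) (b n) := by
    simp only [pp_pow, ← T.wsucc, (T.lvl n).fix, T.fl, zero_pow two_ne_zero]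
    rcases neg_one_pow_eq_or ℝ n with e | e <;> rw [e]
    · simp
    · simp only [neg_one_mul]; rw [cr_neg]
  rw [e]
  obtain ⟨w, hw⟩ : ∃ w, w = - pH n r 0 := ⟨_, rfl⟩
  have h1 := T.bw n
  have h2 := T.wb n
  have h3 := T.wb (n + 1)
  have h4 := T.wpos (n + 1)
  have h5 := T.bpos (n + 1)
  rw [← hw] at h1 h2
  rw [show pH n r 0 = - w by linarith]
  generalize - pH (n + 1) r 0 = w' at *
  generalize b (n + 1) = b' at *
  generalize b n = b0 at *
  unfold cr
  have p1 : b0 - -w ≤ 2 * b0 := by linarith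
  have p2 : w' - -b' ≤ 2 * b' := by linarith
  have p3 : 1/10 * b' ≤ -b' - -w := by linarith
  have p4 : 1/11 * b0 ≤ b0 - w' := by linarith
  have q1 := mul_le_mul p1 p2 (by linarith) (by linarith)
  have q2 := mul_le_mul p3 p4 (by linarith) (by linarith)
  rw [div_le_iff₀ (mul_pos (by linarith) (by linarith))]
  nlinarith

lemma LL_dig1 (T : Tower r b) (n k : ℕ) (hk : k < 2 ^ n) : LL r b (n + 1) (k + 2 ^ n) ≤ 96/100 * LL r b n k := by
  have hb := T.bpos n
  have hb' := T.bpos (n + 1)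
  have hw := T.wpos n
  have e : LL r b (n + 1) (k + 2 ^ n) = |(pp r)^[k] (- pH n r 0) - (pp r)^[k] (b (n+1))| := by
    unfold LL
    rw [Function.iterate_add_apply, Function.iterate_add_apply]
    rcases Nat.eq_zero_or_pos k with rfl | h
    · simp only [Function.iterate_zero, id, pp_pow, T.fl, zero_pow two_ne_zero]
      rw [← mul_sub, abs_mul, abs_pow, abs_neg, abs_one, one_pow, one_mul]
      congr 1; ring
    · rw [pp_iter_abs_sub r ((pp r)^[2 ^ n] (b (n+1))) (b (n+1)) h (by rw [pp_pow_abs, T.fl, abs_neg]),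
        pp_iter_abs_sub r ((pp r)^[2 ^ n] 0) (- pH n r 0) h (by rw [pp_pow_abs, zero_pow two_ne_zero, abs_neg]), abs_sub_comm]
  rw [e]
  unfold LL
  have h1 := T.b'w n
  have h2 := T.wb n
  have C := (T.crs_full n k hk.le le_rfl hb' h1 h2 le_rfl).trans (T.cr_bound n)
  have m0 : (0:ℝ) ∈ Icc 0 (b n) := ⟨le_rfl, (T.bpos n).le⟩
  have m1 : b (n+1) ∈ Icc 0 (b n) := ⟨by linarith, by linarith⟩
  have m2 : - pH n r 0 ∈ Icc 0 (b n) := ⟨by linarith, by linarith⟩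
  have m3 : b n ∈ Icc 0 (b n) := ⟨by linarith, by linarith⟩
  rcases T.mon n k hk.le with h | h
  · have a1 := h m0 m1 hb'
    have a2 := h m1 m2 h1
    have a3 := h m2 m3 h2
    rw [abs_of_pos (by linarith), abs_of_pos (by linarith)]
    exact contr_aux a1 a2 a3 C
  · have a1 := h m0 m1 hb'
    have a2 := h m1 m2 h1
    have a3 := h m2 m3 h2
    rw [abs_of_neg (by linarith), abs_of_neg (by linarith)]
    rw [← cr_rev] at C
    have := contr_aux a3 a2 a1 C
    linarith

lemma LL_nonneg (n k : ℕ) : 0 ≤ LL r b n k := abs_nonneg _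

end Tower

open Filter Set

noncomputable def res (n : ℕ) (x : ℤ_[2]) : ℕ := (PadicInt.toZModPow n x).val

lemma res_lt (n : ℕ) (x : ℤ_[2]) : res n x < 2 ^ n := ZMod.val_lt _

lemma res_add (n : ℕ) (x : ℤ_[2]) : res n (x + 1) = (res n x + 1) % 2 ^ n := by
  unfold res
  rw [map_add, map_one, ZMod.val_add, ZMod.val_one_eq_one_mod, Nat.add_mod_mod]

lemma res_mod (n : ℕ) (x : ℤ_[2]) : res (n + 1) x % 2 ^ n = res n x := by
  unfold res
  rw [← PadicInt.zmod_cast_comp_toZModPow n (n + 1) (Nat.le_succ n)]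
  rw [RingHom.comp_apply, ZMod.castHom_apply, ZMod.cast_eq_val, ZMod.val_natCast]

lemma res_ext {x y : ℤ_[2]} (h : ∀ n, res n x = res n y) : x = y :=
  PadicInt.ext_of_toZModPow.mp fun n => ZMod.val_injective _ (h n)

lemma res_zero (n : ℕ) : res n 0 = 0 := by simp [res]

lemma res_loc (n : ℕ) (x : ℤ_[2]) : ∀ᶠ y in nhds x, res n y = res n x := by
  filter_upwards [Metric.ball_mem_nhds x (show (0:ℝ) < 2 ^ (-(n:ℤ)) by positivity)] with y hy
  have h1 : ‖y - x‖ ≤ (2:ℕ) ^ (-(n:ℤ)) := by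
    rw [← dist_eq_norm]; exact_mod_cast (Metric.mem_ball.mp hy).le
  rw [PadicInt.norm_le_pow_iff_mem_span_pow, ← PadicInt.ker_toZModPow, RingHom.mem_ker, map_sub, sub_eq_zero] at h1
  unfold res; rw [h1]

lemma res_digit (n : ℕ) (x : ℤ_[2]) : res (n + 1) x = res n x ∨ res (n + 1) x = res n x + 2 ^ n := by
  have h1 := res_mod n x
  have h2 := res_lt (n + 1) x
  have h3 := res_lt n x
  rcases lt_or_ge (res (n + 1) x) (2 ^ n) with h | h
  · left; rw [Nat.mod_eq_of_lt h] at h1; exact h1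
  · right
    rw [pow_succ] at h2
    rw [Nat.mod_eq_sub_mod h, Nat.mod_eq_of_lt (by omega)] at h1
    omega

namespace Tower
variable {r : ℝ} {b : ℕ → ℝ}

def KK (r : ℝ) (n k : ℕ) : Set ℝ := (pp r)^[k] '' Icc (pH n r 0) (- pH n r 0)

lemma KK_compact (n k : ℕ) : IsCompact (KK r n k) := isCompact_Icc.image (pp_iter_cont r k)

lemma KK_nonempty (T : Tower r b) (n k : ℕ) : (KK r n k).Nonempty :=
  ⟨_, mem_image_of_mem _ (show (0:ℝ) ∈ Icc _ _ from ⟨by linarith [T.wpos n], (T.wpos n).le⟩)⟩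

lemma mem_Icc_iff {n : ℕ} {x : ℝ} : x ∈ Icc (pH n r 0) (- pH n r 0) ↔ |x| ≤ - pH n r 0 := by
  rw [abs_le, neg_neg]; rfl

lemma KK_nest (T : Tower r b) (n : ℕ) (x : ℤ_[2]) : KK r (n + 1) (res (n + 1) x) ⊆ KK r n (res n x) := by
  rintro _ ⟨u, hu, rfl⟩
  rw [mem_Icc_iff] at hu
  have hu' := hu.trans (T.w'w n).le
  rcases res_digit n x with h | h <;> rw [h]
  · exact ⟨u, mem_Icc_iff.mpr hu', rfl⟩
  · rw [Function.iterate_add_apply]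
    exact mem_image_of_mem _ (mem_Icc_iff.mpr (T.ret_w n hu'))

lemma KK_next (T : Tower r b) (n : ℕ) (x : ℤ_[2]) {y : ℝ} (hy : y ∈ KK r n (res n x)) :
    pp r y ∈ KK r n (res n (x + 1)) := by
  obtain ⟨u, hu, rfl⟩ := hy
  rw [← Function.iterate_succ_apply' (pp r), res_add]
  have h := res_lt n x
  rcases (Nat.succ_le_of_lt h).lt_or_eq with h | h
  · rw [Nat.mod_eq_of_lt h]
    exact mem_image_of_mem _ hu
  · simp only [Nat.succ_eq_add_one] at h ⊢
    rw [h, Nat.mod_self]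
    exact ⟨_, mem_Icc_iff.mpr (T.ret_w n (mem_Icc_iff.mp hu)), rfl⟩

lemma KK_disj (T : Tower r b) (n k : ℕ) (hk : k < 2 ^ n) : Disjoint (KK r (n + 1) k) (KK r (n + 1) (k + 2 ^ n)) := by
  rw [Set.disjoint_left]
  rintro _ ⟨u, hu, rfl⟩ ⟨v, hv, hvu⟩
  rw [mem_Icc_iff] at hu hv
  rw [Function.iterate_add_apply] at hvu
  have h1 := T.ret_b n (hv.trans (T.wb _).le)
  have h2 := T.wb (n + 1)
  have h3 := T.wb n
  set v' := (pp r)^[2 ^ n] v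
  have e : |u| = |v'| := by
    rcases Nat.eq_zero_or_pos k with rfl | h
    · simp only [Function.iterate_zero, id] at hvu; rw [hvu]
    · rw [← pp_iter_abs r _ h, ← pp_iter_abs r u h] at hvu
      exact (T.inj n k hk.le ⟨abs_nonneg _, by linarith [h1.2]⟩ ⟨abs_nonneg _, by linarith [T.w'w n]⟩ hvu).symm
  linarith [h1.1]

lemma LL_tendsto (T : Tower r b) (x : ℤ_[2]) : Tendsto (fun n => LL r b n (res n x)) atTop (nhds 0) := by
  set l : ℕ → ℝ := fun n => LL r b n (res n x) with hl
  have hanti : Antitone l := by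
    refine antitone_nat_of_succ_le fun n => ?_
    simp only [hl]
    rcases res_digit n x with h | h <;> rw [h]
    · exact T.LL_dig0 n _ (res_lt n x)
    · have := T.LL_dig1 n _ (res_lt n x)
      have := LL_nonneg (r := r) (b := b) n (res n x)
      linarith
  have hbdd : BddBelow (range l) := ⟨0, by rintro _ ⟨n, rfl⟩; exact LL_nonneg _ _⟩
  have hlim := tendsto_atTop_ciInf hanti hbdd
  set c := ⨅ i, l i
  have hc0 : 0 ≤ c := le_ciInf fun n => LL_nonneg _ _
  rcases hc0.eq_or_lt with h0 | h0
  · rw [h0]; exact hlim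
  have hge : ∀ n, c ≤ l n := fun n => ciInf_le hbdd n
  have hev := hlim.eventually (gt_mem_nhds (show c < c / (96/100) by linarith))
  obtain ⟨M, hM⟩ := eventually_atTop.mp hev
  have hconst : ∀ n, M ≤ n → res n x = res M x := by
    intro n hn
    induction n, hn using Nat.le_induction with
    | base => rfl
    | succ n hn ih =>
      rcases res_digit n x with h | h
      · rw [h, ih]
      · exfalso
        have a1 := T.LL_dig1 n _ (res_lt n x)
        rw [← h] at a1
        have a2 := hM n hn
        have a3 := hge (n + 1)
        simp only [hl] at a2 a3
        linarith
  have hz : Tendsto l atTop (nhds 0) := by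
    have h1 : Tendsto (fun n => |(pp r)^[res M x] (b n) - (pp r)^[res M x] 0|) atTop (nhds 0) := by
      have := (((pp_iter_cont r (res M x)).tendsto 0).comp T.b_tendsto).sub_const ((pp r)^[res M x] 0)
      simpa using this.abs
    refine h1.congr' ?_
    filter_upwards [eventually_ge_atTop M] with n hn
    simp only [hl, LL, hconst n hn]
  exact hz

lemma exists_pi (T : Tower r b) (x : ℤ_[2]) : ∃ y, ∀ n, y ∈ KK r n (res n x) := by
  have := IsCompact.nonempty_iInter_of_sequence_nonempty_isCompact_isClosed (fun n => KK r n (res n x))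
    (fun n => T.KK_nest n x) (fun n => T.KK_nonempty _ _) (KK_compact _ _) (fun n => (KK_compact _ _).isClosed)
  obtain ⟨y, hy⟩ := this
  exact ⟨y, fun n => mem_iInter.mp hy n⟩

lemma KK_diam (T : Tower r b) (n : ℕ) (x : ℤ_[2]) {y z : ℝ} (hy : y ∈ KK r n (res n x)) (hz : z ∈ KK r n (res n x)) :
    |y - z| ≤ 2 * LL r b n (res n x) := by
  obtain ⟨u, hu, rfl⟩ := hy
  obtain ⟨v, hv, rfl⟩ := hz
  rw [mem_Icc_iff] at hu hv
  have h1 := T.LL_bound n _ (res_lt n x) (hu.trans (T.wb n).le)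
  have h2 := T.LL_bound n _ (res_lt n x) (hv.trans (T.wb n).le)
  rw [abs_le] at *
  constructor <;> linarith [h1.1, h1.2, h2.1, h2.2]

lemma pi_unique (T : Tower r b) (x : ℤ_[2]) {y z : ℝ} (hy : ∀ n, y ∈ KK r n (res n x))
    (hz : ∀ n, z ∈ KK r n (res n x)) : y = z := by
  have h : ∀ n, |y - z| ≤ 2 * LL r b n (res n x) := fun n => T.KK_diam n x (hy n) (hz n)
  have h2 := (T.LL_tendsto x).const_mul 2
  rw [mul_zero] at h2
  have := ge_of_tendsto' h2 h
  have := abs_nonpos_iff.mp this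
  linarith

noncomputable def pi (T : Tower r b) (x : ℤ_[2]) : ℝ := (T.exists_pi x).choose

lemma pi_mem (T : Tower r b) (x : ℤ_[2]) (n : ℕ) : T.pi x ∈ KK r n (res n x) := (T.exists_pi x).choose_spec n

lemma pi_add (T : Tower r b) (x : ℤ_[2]) : T.pi (x + 1) = pp r (T.pi x) :=
  T.pi_unique (x + 1) (T.pi_mem _) fun n => T.KK_next n x (T.pi_mem x n)

lemma pi_zero (T : Tower r b) : T.pi 0 = 0 :=
  T.pi_unique 0 (T.pi_mem _) fun n => by
    rw [res_zero]; exact ⟨0, mem_Icc_iff.mpr (by simpa using (T.wpos n).le), rfl⟩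

lemma pi_inj (T : Tower r b) : Function.Injective T.pi := by
  intro x y hxy
  by_contra hne
  have : ∃ n, res n x ≠ res n y := by
    by_contra h; push Not at h; exact hne (res_ext h)
  classical
  have hs := Nat.find_spec this
  have hm := fun m => Nat.find_min this (m := m)
  set n := Nat.find this
  rcases Nat.eq_zero_or_pos n with h0 | h0
  · rw [h0] at hs
    have := res_lt 0 x
    have := res_lt 0 y
    simp at *; omega
  obtain ⟨m, hmn⟩ : ∃ m, n = m + 1 := ⟨n - 1, by omega⟩
  have e := hm m (by omega)
  push Not at e
  rw [hmn] at hs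
  have hx := T.pi_mem x (m + 1)
  have hy := T.pi_mem y (m + 1)
  rw [hxy] at hx
  have D := T.KK_disj m (res m x) (res_lt m x)
  rw [Set.disjoint_left] at D
  rcases res_digit m x with h1 | h1 <;> rcases res_digit m y with h2 | h2
  · omega
  · rw [h1] at hx; rw [h2, ← e] at hy; exact D hx hy
  · rw [h1] at hx; rw [h2, ← e] at hy; exact D hy hx
  · omega

lemma pi_cont (T : Tower r b) : Continuous T.pi := by
  rw [continuous_iff_continuousAt]
  intro x
  rw [ContinuousAt, Metric.tendsto_nhds]
  intro ε hε
  have h2 := (T.LL_tendsto x).const_mul 2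
  rw [mul_zero] at h2
  obtain ⟨n, hn⟩ := (h2.eventually (gt_mem_nhds hε)).exists
  filter_upwards [res_loc n x] with y hy
  have h1 := T.pi_mem y n
  rw [hy] at h1
  exact (T.KK_diam n x h1 (T.pi_mem x n)).trans_lt hn

lemma pi_bound (T : Tower r b) (x : ℤ_[2]) : |T.pi x| < b 0 := by
  have h := T.pi_mem x 0
  have h2 := res_lt 0 x
  rw [pow_zero, Nat.lt_one_iff] at h2
  rw [h2] at h
  obtain ⟨u, hu, hue⟩ := h
  simp only [Function.iterate_zero, id] at hue
  rw [← hue]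
  exact (mem_Icc_iff.mp hu).trans_lt (T.wb 0)

end Tower


namespace Tower
variable {r : ℝ} {b : ℕ → ℝ}

lemma pp_b0 (T : Tower r b) {x : ℝ} (hx : |x| < b 0) : |pp r x| < b 0 := by
  have h2 := T.hle 0 (x := 0) (y := x) (by simp) hx.le
  rw [zero_pow two_ne_zero] at h2
  have hb := T.bpos 0
  have h1 : pH 0 r (x ^ 2) < b 0 := by
    have e := (T.lvl 0).fix
    have : x ^ 2 < b 0 ^ 2 := sq_lt_sq.mpr (by rwa [abs_of_pos hb])
    have := (T.lvl 0).mono (show x ^ 2 ∈ Icc 0 (b 0 ^ 2) from ⟨sq_nonneg _, this.le⟩) (show b 0 ^ 2 ∈ Icc 0 (b 0 ^ 2) from ⟨sq_nonneg _, le_rfl⟩) this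
    rwa [e] at this
  rw [pp_eq, abs_lt]
  constructor <;> linarith [T.wb 0]

lemma visit (T : Tower r b) {x : ℝ} (hx : |x| < b 0) (hne : ∀ k n, |(pp r)^[k] x| ≠ b n) (n : ℕ) :
    ∃ k, |(pp r)^[k] x| < b n := by
  induction n with
  | zero => exact ⟨0, hx⟩
  | succ n ih =>
    obtain ⟨k, hk⟩ := ih
    by_contra hcon
    push Not at hcon
    set y : ℕ → ℝ := fun j => |(pp r)^[j * 2 ^ n + k] x| with hy
    have hgt : ∀ j, b (n + 1) < y j := fun j => lt_of_le_of_ne (hcon _) (hne _ _).symm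
    have hb := T.bpos (n + 1)
    have hrec : ∀ j, y (j + 1) = |pH n r ((y j) ^ 2)| := by
      intro j
      simp only [hy, sq_abs]
      rw [← pp_pow_abs, ← Function.iterate_add_apply]
      rw [show (j + 1) * 2 ^ n + k = 2 ^ n + (j * 2 ^ n + k) by ring]
    have hlt : ∀ j, y j < b n → y (j + 1) = pH n r ((y j) ^ 2) ∧ y (j + 1) < y j := by
      intro j hj
      have hyj : 0 < y j := hb.trans (hgt j)
      have h1 := T.hle n (x := b (n + 1)) (y := y j) (by rw [abs_of_pos hb, abs_of_pos hyj]; exact (hgt j).le) (by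
        rw [abs_of_pos hyj]; exact hj.le)
      rw [T.fl] at h1
      have h2 := hgt (j + 1)
      rw [hrec] at h2
      have h3 : 0 ≤ pH n r ((y j) ^ 2) := by
        by_contra h; push Not at h; rw [abs_of_neg h] at h2; linarith
      have e := hrec j
      rw [abs_of_nonneg h3] at e
      exact ⟨e, e ▸ (T.lvl n).below hyj.le hj⟩
    have hall : ∀ j, y j < b n := by
      intro j
      induction j with
      | zero => simpa [hy] using hk
      | succ j ih => exact (hlt j ih).2.trans ih
    have hanti : Antitone y := antitone_nat_of_succ_le fun j => (hlt j (hall j)).2.le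
    have hbdd : BddBelow (range y) := ⟨0, by rintro _ ⟨j, rfl⟩; exact abs_nonneg _⟩
    have hlim := tendsto_atTop_ciInf hanti hbdd
    set c := ⨅ i, y i
    have hc0 : 0 ≤ c := le_ciInf fun n => abs_nonneg _
    have hcb : c < b n := (ciInf_le hbdd 0).trans_lt (hall 0)
    have h1 := hlim.comp (tendsto_add_atTop_nat 1)
    have hcont : Continuous (fun u : ℝ => pH n r (u ^ 2)) := (T.lvl n).cont.comp (continuous_pow 2)
    have h2 := (hcont.tendsto c).comp hlim
    have h3 : (y ∘ fun a => a + 1) = ((fun u : ℝ => pH n r (u ^ 2)) ∘ y) := by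
      funext j; exact (hlt j (hall j)).1
    rw [h3] at h1
    have := tendsto_nhds_unique h1 h2
    have := (T.lvl n).below hc0 hcb
    linarith

lemma freq (T : Tower r b) {x : ℝ} (hx : |x| < b 0) (hne : ∀ k n, |(pp r)^[k] x| ≠ b n)
    (hn0 : ∀ k, (pp r)^[k] x ≠ 0) {ε : ℝ} (hε : 0 < ε) : ∃ᶠ k in atTop, |(pp r)^[k] x| < ε := by
  by_contra hcon
  rw [not_frequently, eventually_atTop] at hcon
  obtain ⟨M, hM⟩ := hcon
  have hm : ∀ M, ∃ m > 0, ∀ k < M, m ≤ |(pp r)^[k] x| := by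
    intro M
    induction M with
    | zero => exact ⟨1, one_pos, fun k hk => by omega⟩
    | succ M ih =>
      obtain ⟨m, hm0, hm⟩ := ih
      refine ⟨min m |(pp r)^[M] x|, lt_min hm0 (abs_pos.mpr (hn0 M)), fun k hk => ?_⟩
      rcases Nat.lt_succ_iff_lt_or_eq.mp hk with h | rfl
      · exact (min_le_left _ _).trans (hm k h)
      · exact min_le_right _ _
  obtain ⟨m, hm0, hm⟩ := hm M
  obtain ⟨n, hn⟩ := (T.b_tendsto.eventually (gt_mem_nhds (lt_min hm0 hε))).exists
  obtain ⟨k, hk⟩ := T.visit hx hne n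
  have hk2 := hk.trans hn
  rcases lt_or_ge k M with h | h
  · linarith [hm k h, min_le_left m ε]
  · exact hM k h (hk2.trans_le (min_le_right _ _))

lemma pp_preimage_countable (T : Tower r b) {S : Set ℝ} (hS : S.Countable) : (pp r ⁻¹' S).Countable := by
  have hr : 0 < r := by linarith [T.r1]
  refine Set.Countable.mono ?_ (hS.biUnion (t := fun y _ =>
    {√(1 + √((1 - y) / r)), -√(1 + √((1 - y) / r)), √(1 - √((1 - y) / r)), -√(1 - √((1 - y) / r))})
    (fun y _ => (Set.toFinite _).countable))
  intro x hx
  rw [mem_iUnion₂]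
  refine ⟨pp r x, hx, ?_⟩
  have e : (1 - pp r x) / r = (1 - x ^ 2) ^ 2 := by unfold pp; field_simp; ring
  rw [e, Real.sqrt_sq_eq_abs]
  have key : x = √(x ^ 2) ∨ x = - √(x ^ 2) := by
    rw [Real.sqrt_sq_eq_abs]
    rcases abs_cases x with h | h <;> rw [h.1]
    · left; rfl
    · right; ring
  simp only [mem_insert_iff, mem_singleton_iff]
  rcases abs_cases (1 - x ^ 2) with h | h <;> rw [h.1]
  · rw [show 1 - (1 - x ^ 2) = x ^ 2 by ring]; tauto
  · rw [show 1 + -(1 - x ^ 2) = x ^ 2 by ring]; tauto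

lemma bad_countable (T : Tower r b) : {x : ℝ | ∃ k, (pp r)^[k] x = 0 ∨ ∃ n, |(pp r)^[k] x| = b n}.Countable := by
  have hS : ({x : ℝ | x = 0 ∨ ∃ n, |x| = b n}).Countable := by
    refine Set.Countable.mono (s₂ := {0} ∪ (range b ∪ range (fun n => - b n))) ?_ ?_
    · rintro x (h | ⟨n, h⟩)
      · left; exact h
      · right
        rcases abs_cases x with h' | h'
        · left; exact ⟨n, by linarith⟩
        · right; exact ⟨n, by simp only; linarith⟩
    · exact (countable_singleton _).union ((countable_range _).union (countable_range _))
  have : ∀ k, ((pp r)^[k] ⁻¹' {x : ℝ | x = 0 ∨ ∃ n, |x| = b n}).Countable := by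
    intro k
    induction k with
    | zero => exact hS
    | succ k ih =>
      rw [Function.iterate_succ, preimage_comp]
      exact T.pp_preimage_countable ih
  refine (countable_iUnion this).mono ?_
  rintro x ⟨k, hk⟩
  exact mem_iUnion.mpr ⟨k, hk⟩

theorem pd_attractor (T : Tower r b) (q : ℝ → ℝ → ℝ) (y0 δ : ℝ) (hδ : 0 < δ) (hq0 : ∀ x, q x y0 = y0)
    (hq : ∀ x y, |x| < b 0 → |y - y0| < δ → |q x y - y0| ≤ 1/2 * |y - y0|)
    (f : ℝ × ℝ → ℝ × ℝ) (hf : ∀ x y, f (x, y) = (pp r x, q x y)) :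
    IsPDCantorAttractor f (range fun τ => (T.pi τ, y0)) := by
  have hjc : Continuous (fun τ => (T.pi τ, y0)) := T.pi_cont.prodMk continuous_const
  have hji : Function.Injective (fun τ => (T.pi τ, y0)) := fun x y h => T.pi_inj (congrArg Prod.fst h)
  have hemb := (hjc.isClosedEmbedding hji).isEmbedding
  have hfj : ∀ τ, f (T.pi τ, y0) = (T.pi (τ + 1), y0) := fun τ => by rw [hf, hq0, T.pi_add]
  refine ⟨isCompact_range hjc, ?_, ⟨hemb.toHomeomorph.symm, ?_⟩, ?_⟩
  · ext z
    constructor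
    · rintro ⟨_, ⟨τ, rfl⟩, rfl⟩
      exact ⟨τ + 1, (hfj τ).symm⟩
    · rintro ⟨τ, rfl⟩
      exact ⟨_, ⟨τ - 1, rfl⟩, by simp only [hfj, sub_add_cancel]⟩
  · rintro ⟨_, τ, rfl⟩ hx
    rw [Homeomorph.symm_apply_eq]
    have e1 : hemb.toHomeomorph.symm ⟨(T.pi τ, y0), ⟨τ, rfl⟩⟩ = τ := by
      rw [Homeomorph.symm_apply_eq]; rfl
    simp only [e1]
    apply Subtype.ext
    exact hfj τ
  · refine ⟨{z | |z.1| < b 0 ∧ |z.2 - y0| < δ}, ?_, ?_, ?_⟩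
    · have o1 : IsOpen {z : ℝ × ℝ | |z.1| < b 0} := isOpen_lt (by fun_prop) (by fun_prop)
      have o2 : IsOpen {z : ℝ × ℝ | |z.2 - y0| < δ} := isOpen_lt (by fun_prop) (by fun_prop)
      exact o1.inter o2
    · rintro _ ⟨τ, rfl⟩
      exact ⟨T.pi_bound τ, by simpa using hδ⟩
    · have hnull : MeasureTheory.volume
          ({x : ℝ | ∃ k, (pp r)^[k] x = 0 ∨ ∃ n, |(pp r)^[k] x| = b n} ×ˢ (univ : Set ℝ)) = 0 := by
        rw [MeasureTheory.Measure.volume_eq_prod, MeasureTheory.Measure.prod_prod,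
          T.bad_countable.measure_zero, zero_mul]
      filter_upwards [MeasureTheory.compl_mem_ae_iff.mpr hnull] with z hz hzU
      obtain ⟨x, y⟩ := z
      have hz' : ∀ k, (pp r)^[k] x ≠ 0 ∧ ∀ n, |(pp r)^[k] x| ≠ b n := by
        intro k
        by_contra h
        apply hz
        refine ⟨⟨k, ?_⟩, mem_univ _⟩
        by_contra h'; push Not at h'; exact h h'
      obtain ⟨hx, hy⟩ := hzU
      simp only at hx hy
      have hit : ∀ k, (f^[k] (x, y)).1 = (pp r)^[k] x ∧ |(pp r)^[k] x| < b 0 ∧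
          |(f^[k] (x, y)).2 - y0| ≤ (1/2) ^ k * δ ∧ |(f^[k] (x, y)).2 - y0| < δ := by
        intro k
        induction k with
        | zero => exact ⟨rfl, hx, by simpa using hy.le, hy⟩
        | succ k ih =>
          obtain ⟨h1, h2, h3, h4⟩ := ih
          rw [Function.iterate_succ_apply', Function.iterate_succ_apply']
          have e : f (f^[k] (x, y)) = (pp r ((pp r)^[k] x), q ((pp r)^[k] x) (f^[k] (x, y)).2) := by
            rw [← h1, ← hf]
          rw [e]
          have := hq _ _ h2 h4
          refine ⟨rfl, T.pp_b0 h2, ?_, ?_⟩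
          · rw [pow_succ]; simp only; linarith
          · simp only; linarith
      refine ⟨(0, y0), ?_, 0, by simp only [T.pi_zero]⟩
      rw [mem_omegaLimit_iff_frequently]
      intro V hV
      obtain ⟨ε, hε, hball⟩ := Metric.mem_nhds_iff.mp hV
      have hev : ∀ᶠ k : ℕ in atTop, (1/2:ℝ) ^ k * δ < ε := by
        have := (tendsto_pow_atTop_nhds_zero_of_lt_one (r := (1/2:ℝ)) (by norm_num) (by norm_num)).mul_const δ
        rw [zero_mul] at this
        exact this.eventually (gt_mem_nhds hε)
      refine ((T.freq hx (fun k => (hz' k).2) (fun k => (hz' k).1) hε).and_eventually hev).mono ?_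
      rintro k ⟨h1, h2⟩
      refine ⟨(x, y), rfl, hball ?_⟩
      rw [Metric.mem_ball, Prod.dist_eq]
      obtain ⟨a1, a2, a3, a4⟩ := hit k
      refine max_lt ?_ ?_
      · rw [a1, Real.dist_eq, sub_zero]; exact h1
      · rw [Real.dist_eq]; exact a3.trans_lt h2

end Tower

open Filter Set

structure Tt (t : ℝ) : Prop where
  h : t ^ 3 + 2 * t ^ 2 = 2
  lo : 83/100 < t
  hi : t < 84/100

lemma exists_Tt : ∃ t, Tt t := by
  obtain ⟨t, ht, h⟩ := intermediate_value_Ioo (show (83/100:ℝ) ≤ 84/100 by norm_num)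
    (show ContinuousOn (fun t : ℝ => t ^ 3 + 2 * t ^ 2) _ by fun_prop)
    (show (2:ℝ) ∈ Ioo _ _ from ⟨by norm_num, by norm_num⟩)
  exact ⟨t, h, ht.1, ht.2⟩

def QQ (t y : ℝ) : ℝ := y ^ 2 - t - t ^ 2
def GG (t y : ℝ) : ℝ := QQ t (QQ t y)

lemma QQ_cont (t : ℝ) : Continuous (QQ t) := by unfold QQ; fun_prop
lemma GG_cont (t : ℝ) : Continuous (GG t) := (QQ_cont t).comp (QQ_cont t)

lemma GG_even (t y : ℝ) : GG t (-y) = GG t y := by simp [GG, QQ]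

lemma GG_iter (t y : ℝ) (n : ℕ) : (GG t)^[n] y = (QQ t)^[2 * n] y := by
  rw [Function.iterate_mul]; rfl

lemma GG_add (t y : ℝ) : GG t y + t = (t ^ 2 - y ^ 2) * (t ^ 2 + 2 * t - y ^ 2) := by
  unfold GG QQ; ring

namespace Tt
variable {t : ℝ}

lemma pos (T : Tt t) : 0 < t := by linarith [T.lo]

lemma sub_GG (T : Tt t) (y : ℝ) : t - GG t y = y ^ 2 * (2 * t + 2 * t ^ 2 - y ^ 2) := by
  unfold GG QQ; linear_combination (-t) * T.h

lemma sq_le (T : Tt t) {y : ℝ} (hy : |y| ≤ t) : y ^ 2 ≤ t ^ 2 := by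
  apply sq_le_sq.mpr; rwa [abs_of_pos T.pos]

lemma GG_maps (T : Tt t) {y : ℝ} (hy : |y| ≤ t) : |GG t y| ≤ t := by
  have h1 := GG_add t y
  have h2 := T.sub_GG y
  have h3 := T.sq_le hy
  have h4 := T.pos
  have p1 : 0 ≤ (t ^ 2 - y ^ 2) * (t ^ 2 + 2 * t - y ^ 2) := mul_nonneg (by linarith) (by linarith)
  have p2 : 0 ≤ y ^ 2 * (2 * t + 2 * t ^ 2 - y ^ 2) := mul_nonneg (sq_nonneg _) (by nlinarith)
  rw [abs_le]; constructor <;> linarith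

lemma iter_maps (T : Tt t) {y : ℝ} (hy : |y| ≤ t) (n : ℕ) : |(GG t)^[n] y| ≤ t := by
  induction n with
  | zero => exact hy
  | succ n ih => rw [Function.iterate_succ_apply']; exact T.GG_maps ih

lemma key (T : Tt t) {y : ℝ} (hy : |y| ≤ t) :
    256/100 * (t ^ 2 - (GG t y) ^ 2) ≤ (4 * y * (y ^ 2 - t - t ^ 2)) ^ 2 * (t ^ 2 - y ^ 2) := by
  have e : t ^ 2 - (GG t y) ^ 2 = (GG t y + t) * (t - GG t y) := by ring
  rw [e, GG_add, T.sub_GG]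
  obtain ⟨σ, hσ⟩ : ∃ σ, σ = t ^ 2 - y ^ 2 := ⟨_, rfl⟩
  have h0 : 0 ≤ σ := by linarith [T.sq_le hy]
  have hy2 : y ^ 2 = t ^ 2 - σ := by linarith
  have h4 := T.pos
  have h5 := T.hi
  have p : 0 ≤ 16 * (t + σ) ^ 2 - 256/100 * ((2 * t + σ) * (2 * t + t ^ 2 + σ)) := by
    have e : 16 * (t + σ) ^ 2 - 256/100 * ((2 * t + σ) * (2 * t + t ^ 2 + σ)) =
      t ^ 2 * (16 - 512/100 * (2 + t)) + σ * (t * (32 - 1024/100 - 256/100 * t)) + (16 - 256/100) * σ ^ 2 := by ring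
    rw [e]
    have a1 : 0 ≤ 16 - 512/100 * (2 + t) := by linarith
    have a2 : 0 ≤ 32 - 1024/100 - 256/100 * t := by linarith
    positivity
  have := mul_nonneg (mul_nonneg (sq_nonneg y) h0) p
  have e2 : (4 * y * (y ^ 2 - t - t ^ 2)) ^ 2 * (t ^ 2 - y ^ 2) -
     256/100 * ((t ^ 2 - y ^ 2) * (t ^ 2 + 2 * t - y ^ 2) * (y ^ 2 * (2 * t + 2 * t ^ 2 - y ^ 2)))
     = y ^ 2 * σ * (16 * (t + σ) ^ 2 - 256/100 * ((2 * t + σ) * (2 * t + t ^ 2 + σ))) := by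
    have : (4 * y * (y ^ 2 - t - t ^ 2)) ^ 2 = 16 * y ^ 2 * (y ^ 2 - t - t ^ 2) ^ 2 := by ring
    rw [this, hy2]; ring
  linarith

/-- the coordinate -/
noncomputable def AL (t y : ℝ) : ℝ := Real.arcsin (y / t)

lemma AL_cont (t : ℝ) : Continuous (AL t) := Real.continuous_arcsin.comp (continuous_id.div_const t)

lemma AL_neg (t y : ℝ) : AL t (-y) = - AL t y := by
  unfold AL; rw [neg_div, Real.arcsin_neg]

lemma QQ_deriv (t y : ℝ) : HasDerivAt (QQ t) (2 * y) y := by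
  have := ((hasDerivAt_pow 2 y).sub_const t).sub_const (t ^ 2)
  exact this.congr_deriv (by simp)

lemma GG_deriv (t y : ℝ) : HasDerivAt (GG t) (4 * y * (y ^ 2 - t - t ^ 2)) y := by
  have h1 := QQ_deriv t y
  have h2 := QQ_deriv t (QQ t y)
  have := h2.comp y h1
  refine this.congr_deriv ?_
  unfold QQ; ring

lemma expand_neg (T : Tt t) : MonotoneOn (fun y => AL t (GG t y) - 16/10 * AL t y) (Icc (-t) 0) := by
  have ht := T.pos
  have hd : ∀ y ∈ Ioo (-t) 0, ∃ d, 0 ≤ d ∧ HasDerivAt (fun y => AL t (GG t y) - 16/10 * AL t y) d y := by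
    intro y hy
    have hya : |y| ≤ t := by rw [abs_le]; exact ⟨hy.1.le, hy.2.le.trans ht.le⟩
    have hy2 : y ^ 2 < t ^ 2 := by nlinarith [hy.1, hy.2]
    have hG1 : 0 < GG t y + t := by
      rw [GG_add]; exact mul_pos (by linarith) (by linarith)
    have hG2 : 0 < t - GG t y := by
      rw [T.sub_GG]; exact mul_pos (by nlinarith [hy.2]) (by nlinarith)
    have a1 : y / t ≠ -1 := by rw [Ne, div_eq_iff ht.ne']; linarith [hy.1]
    have a2 : y / t ≠ 1 := by rw [Ne, div_eq_iff ht.ne']; linarith [hy.2]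
    have a3 : GG t y / t ≠ -1 := by rw [Ne, div_eq_iff ht.ne']; intro h; linarith
    have a4 : GG t y / t ≠ 1 := by rw [Ne, div_eq_iff ht.ne']; intro h; linarith
    have d1 : HasDerivAt (AL t) (1 / √(1 - (y / t) ^ 2) * (1 / t)) y :=
      (Real.hasDerivAt_arcsin a1 a2).comp y ((hasDerivAt_id y).div_const t)
    have d2 : HasDerivAt (fun y => AL t (GG t y)) (1 / √(1 - (GG t y / t) ^ 2) * ((4 * y * (y ^ 2 - t - t ^ 2)) / t)) y :=
      (Real.hasDerivAt_arcsin a3 a4).comp y ((GG_deriv t y).div_const t)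
    refine ⟨_, ?_, d2.sub (d1.const_mul (16/10))⟩
    have k := T.key hya
    have hD : 0 < 4 * y * (y ^ 2 - t - t ^ 2) := by
      have : y ^ 2 - t - t ^ 2 < 0 := by linarith
      nlinarith [hy.2, mul_pos (neg_pos.mpr hy.2) (neg_pos.mpr this)]
    set D := 4 * y * (y ^ 2 - t - t ^ 2)
    have A0 : 0 < 1 - (y / t) ^ 2 := by rw [div_pow, sub_pos, div_lt_one (by positivity)]; exact hy2
    have B0 : 0 < 1 - (GG t y / t) ^ 2 := by
      rw [div_pow, sub_pos, div_lt_one (by positivity)]; nlinarith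
    have k2 : 256/100 * (1 - (GG t y / t) ^ 2) ≤ D ^ 2 * (1 - (y / t) ^ 2) := by
      have e1 : 1 - (GG t y / t) ^ 2 = (t ^ 2 - (GG t y) ^ 2) / t ^ 2 := by field_simp
      have e2 : 1 - (y / t) ^ 2 = (t ^ 2 - y ^ 2) / t ^ 2 := by field_simp
      rw [e1, e2, ← mul_div_assoc, ← mul_div_assoc]
      exact div_le_div_of_nonneg_right k (by positivity)
    have k3 : 16/10 * √(1 - (GG t y / t) ^ 2) ≤ D * √(1 - (y / t) ^ 2) := by
      refine (pow_le_pow_iff_left₀ (by positivity) (by positivity) two_ne_zero).mp ?_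
      rw [mul_pow, mul_pow, Real.sq_sqrt A0.le, Real.sq_sqrt B0.le]
      linarith
    have A1 := Real.sqrt_pos.mpr A0
    have B1 := Real.sqrt_pos.mpr B0
    have : 16/10 * (1 / √(1 - (y / t) ^ 2)) ≤ 1 / √(1 - (GG t y / t) ^ 2) * D := by
      rw [mul_one_div, one_div_mul_eq_div, div_le_div_iff₀ A1 B1]; exact k3
    have := mul_le_mul_of_nonneg_right this (show 0 ≤ 1 / t by positivity)
    rw [sub_nonneg]
    calc _ = 16/10 * (1 / √(1 - (y / t) ^ 2)) * (1 / t) := by ring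
      _ ≤ _ := this
      _ = _ := by ring
  refine monotoneOn_of_deriv_nonneg (convex_Icc _ _) ?_ ?_ ?_
  · exact (((AL_cont t).comp (GG_cont t)).sub (continuous_const.mul (AL_cont t))).continuousOn
  · rw [interior_Icc]; intro y hy
    obtain ⟨d, _, h⟩ := hd y hy
    exact h.differentiableAt.differentiableWithinAt
  · rw [interior_Icc]; intro y hy
    obtain ⟨d, h0, h⟩ := hd y hy
    rw [h.deriv]; exact h0

lemma AL_mono (T : Tt t) : Monotone (AL t) := fun x y h =>
  Real.monotone_arcsin (div_le_div_of_nonneg_right h T.pos.le)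

lemma expand_neg' (T : Tt t) {u v : ℝ} (hu : u ∈ Icc (-t) 0) (hv : v ∈ Icc (-t) 0) :
    16/10 * |AL t u - AL t v| ≤ |AL t (GG t u) - AL t (GG t v)| := by
  wlog h : v ≤ u generalizing u v
  · rw [abs_sub_comm, abs_sub_comm (AL t (GG t u))]; exact this hv hu (by linarith)
  have h1 := T.expand_neg hv hu h
  have h2 := T.AL_mono h
  simp only at h1
  rw [abs_of_nonneg (by linarith), abs_of_nonneg (by linarith)]; linarith

lemma expand (T : Tt t) {u v : ℝ} (hu : |u| ≤ t) (hv : |v| ≤ t) (h : (0 ≤ u ∧ 0 ≤ v) ∨ (u ≤ 0 ∧ v ≤ 0)) :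
    16/10 * |AL t u - AL t v| ≤ |AL t (GG t u) - AL t (GG t v)| := by
  rw [abs_le] at hu hv
  rcases h with h | h
  · have := T.expand_neg' (u := -u) (v := -v) ⟨by linarith [hu.2], by linarith⟩ ⟨by linarith [hv.2], by linarith⟩
    rw [AL_neg, AL_neg, GG_even, GG_even, ← abs_neg] at this
    rw [show AL t u - AL t v = -(-AL t u - -AL t v) by ring]; exact this
  · exact T.expand_neg' ⟨hu.1, h.1⟩ ⟨hv.1, h.2⟩

lemma AL_inv (T : Tt t) {y : ℝ} (hy : |y| ≤ t) : y = t * Real.sin (AL t y) := by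
  rw [abs_le] at hy
  unfold AL
  rw [Real.sin_arcsin, mul_div_cancel₀ _ T.pos.ne']
  · rw [le_div_iff₀ T.pos]; linarith
  · rw [div_le_one T.pos]; exact hy.2

lemma AL_lip (T : Tt t) {u v : ℝ} (hu : |u| ≤ t) (hv : |v| ≤ t) : |u - v| ≤ |AL t u - AL t v| := by
  have h : |Real.sin (AL t u) - Real.sin (AL t v)| ≤ |AL t u - AL t v| := by
    have := Real.lipschitzWith_sin.dist_le_mul (AL t u) (AL t v)
    simpa [Real.dist_eq] using this
  have e : u - v = t * (Real.sin (AL t u) - Real.sin (AL t v)) := by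
    rw [mul_sub, ← T.AL_inv hu, ← T.AL_inv hv]
  rw [e, abs_mul, abs_of_pos T.pos]
  have := T.hi
  have := abs_nonneg (Real.sin (AL t u) - Real.sin (AL t v))
  nlinarith

lemma AL_diam (t u v : ℝ) : |AL t u - AL t v| ≤ 4 := by
  have h1 := Real.neg_pi_div_two_le_arcsin (u / t)
  have h2 := Real.arcsin_le_pi_div_two (u / t)
  have h3 := Real.neg_pi_div_two_le_arcsin (v / t)
  have h4 := Real.arcsin_le_pi_div_two (v / t)
  have := Real.pi_le_four
  unfold AL
  rw [abs_le]; constructor <;> linarith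

/-- side condition -/
def Sd (w : Bool) (y : ℝ) : Prop := (w = true → 0 ≤ y) ∧ (w = false → y ≤ 0)

lemma same_itin (T : Tt t) {u v : ℝ} (hu : |u| ≤ t) (hv : |v| ≤ t) (w : ℕ → Bool) (N : ℕ)
    (h1 : ∀ n < N, Sd (w n) ((GG t)^[n] u)) (h2 : ∀ n < N, Sd (w n) ((GG t)^[n] v)) :
    (16/10) ^ N * |AL t u - AL t v| ≤ 4 := by
  have : ∀ n ≤ N, (16/10) ^ n * |AL t u - AL t v| ≤ |AL t ((GG t)^[n] u) - AL t ((GG t)^[n] v)| := by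
    intro n
    induction n with
    | zero => intro _; simp
    | succ n ih =>
      intro hn
      have a := ih (by omega)
      have c := T.expand (T.iter_maps hu n) (T.iter_maps hv n) (by
        have b1 := h1 n (by omega)
        have b2 := h2 n (by omega)
        rcases hw : w n with _ | _
        · right; exact ⟨b1.2 hw, b2.2 hw⟩
        · left; exact ⟨b1.1 hw, b2.1 hw⟩)
      rw [Function.iterate_succ_apply', Function.iterate_succ_apply', pow_succ]
      linarith
  exact (this N le_rfl).trans (AL_diam _ _ _)

lemma GG_onto (T : Tt t) (w : Bool) {z : ℝ} (hz : |z| ≤ t) : ∃ y, |y| ≤ t ∧ Sd w y ∧ GG t y = z := by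
  have ht := T.pos
  rw [abs_le] at hz
  have e0 : GG t 0 = t := by have := T.sub_GG 0; simp at this; linarith
  have e1 : GG t (-t) = -t := by have := GG_add t (-t); simp at this; linarith
  obtain ⟨y, hy, hyz⟩ := intermediate_value_Icc (by linarith : -t ≤ 0) (GG_cont t).continuousOn
    (show z ∈ Icc _ _ from ⟨by linarith, by linarith⟩)
  rcases w with _ | _
  · exact ⟨y, by rw [abs_le]; exact ⟨hy.1, by linarith [hy.2]⟩, ⟨by simp, fun _ => hy.2⟩, hyz⟩
  · exact ⟨-y, by rw [abs_neg, abs_le]; exact ⟨hy.1, by linarith [hy.2]⟩, ⟨fun _ => by linarith [hy.2], by simp⟩,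
      by rw [GG_even]; exact hyz⟩

lemma exists_itin (T : Tt t) (w : ℕ → Bool) : ∃ z, |z| ≤ t ∧ ∀ n, Sd (w n) ((GG t)^[n] z) := by
  have fin : ∀ N (w : ℕ → Bool), ∃ z, |z| ≤ t ∧ ∀ n < N, Sd (w n) ((GG t)^[n] z) := by
    intro N
    induction N with
    | zero => exact fun w => ⟨0, by simpa using T.pos.le, fun n hn => by omega⟩
    | succ N ih =>
      intro w
      obtain ⟨z, hz, h⟩ := ih (fun n => w (n + 1))
      obtain ⟨y, hy, hs, hyz⟩ := T.GG_onto (w 0) hz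
      refine ⟨y, hy, fun n hn => ?_⟩
      rcases n with _ | n
      · exact hs
      · rw [Function.iterate_succ_apply, hyz]; exact h n (by omega)
  have hclosed : ∀ n, IsClosed {z : ℝ | Sd (w n) ((GG t)^[n] z)} := by
    intro n
    have hc := (GG_cont t).iterate n
    rcases hw : w n with _ | _
    · simp only [Sd, reduceCtorEq, forall_true_left, false_implies, true_and]
      exact isClosed_le hc continuous_const
    · simp only [Sd, reduceCtorEq, forall_true_left, false_implies, and_true]
      exact isClosed_le continuous_const hc
  let C : ℕ → Set ℝ := fun N => Icc (-t) t ∩ ⋂ n ∈ Iio N, {z : ℝ | Sd (w n) ((GG t)^[n] z)}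
  have hC : ∀ N, IsClosed (C N) := fun N => isClosed_Icc.inter (isClosed_biInter fun n _ => hclosed n)
  have := IsCompact.nonempty_iInter_of_sequence_nonempty_isCompact_isClosed C
    (fun N => inter_subset_inter_right _ (biInter_subset_biInter_left (Iio_subset_Iio (Nat.le_succ N))))
    (fun N => by
      obtain ⟨z, hz, h⟩ := fin N w
      exact ⟨z, abs_le.mp hz, mem_iInter₂.mpr fun n hn => h n hn⟩)
    (isCompact_Icc.inter_right (isClosed_biInter fun n _ => hclosed n)) hC
  obtain ⟨z, hz⟩ := this
  rw [mem_iInter] at hz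
  refine ⟨z, abs_le.mpr (hz 0).1, fun n => ?_⟩
  exact mem_iInter₂.mp (hz (n + 1)).2 n (Nat.lt_succ_self n)

end Tt

/-- the universal word -/
def om (n : ℕ) : Bool := !(Nat.testBit (Nat.sqrt n) (n - Nat.sqrt n * Nat.sqrt n))

lemma om_eq (s j : ℕ) (hj : j ≤ s + s) : om (s * s + j) = !(Nat.testBit s j) := by
  unfold om; rw [Nat.sqrt_add_eq s hj, Nat.add_sub_cancel_left]

lemma om_gap (n : ℕ) : ∃ i ≤ Nat.sqrt n, om (n + i) = true := by
  obtain ⟨s, hs⟩ : ∃ s, s = Nat.sqrt n := ⟨_, rfl⟩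
  have h1 : s * s ≤ n := hs ▸ Nat.sqrt_le n
  have h2 : n ≤ s * s + s + s := hs ▸ Nat.sqrt_le_add n
  rw [← hs]
  have hbit : ∀ j, s ≤ j → Nat.testBit s j = false := fun j hj =>
    Nat.testBit_lt_two_pow (Nat.lt_two_pow_self.trans_le (Nat.pow_le_pow_right (by norm_num) hj))
  obtain ⟨j, hj⟩ : ∃ j, n = s * s + j := ⟨n - s * s, by omega⟩
  rcases le_or_gt s j with h | h
  · exact ⟨0, Nat.zero_le _, by rw [add_zero, hj, om_eq s j (by omega), hbit j h]; rfl⟩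
  · refine ⟨s - j, by omega, ?_⟩
    rw [show n + (s - j) = s * s + s by omega, om_eq s s (by omega), hbit s le_rfl]; rfl

lemma exists_bits (N : ℕ) (e : ℕ → Bool) : ∃ s, ∀ j < N, Nat.testBit s j = e j := by
  induction N generalizing e with
  | zero => exact ⟨0, fun j hj => by omega⟩
  | succ N ih =>
    obtain ⟨s, hs⟩ := ih (fun j => e (j + 1))
    refine ⟨Nat.bit (e 0) s, fun j hj => ?_⟩
    rcases j with _ | j
    · exact Nat.testBit_bit_zero _ _
    · rw [Nat.testBit_bit_succ]; exact hs j (by omega)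

lemma om_word (N : ℕ) (e : ℕ → Bool) : ∃ M, ∀ j < N, om (M + j) = e j := by
  obtain ⟨s, hs⟩ := exists_bits (N + 1) (fun j => if j = N then true else !(e j))
  have hN : N ≤ s := by
    have := hs N (by omega)
    simp only [if_true] at this
    exact Nat.lt_two_pow_self.le.trans (Nat.ge_two_pow_of_testBit this)
  refine ⟨s * s, fun j hj => ?_⟩
  rw [om_eq s j (by omega), hs j (by omega), if_neg (by omega), Bool.not_not]

open Filter Set

namespace Tt
variable {t : ℝ}

lemma dense_GG (T : Tt t) {z : ℝ} (hz : |z| ≤ t) (hi : ∀ n, Sd (om n) ((GG t)^[n] z)) {y : ℝ} (hy : |y| ≤ t)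
    {ε : ℝ} (hε : 0 < ε) : ∃ n, |(GG t)^[n] z - y| < ε := by
  have hlim := (tendsto_pow_atTop_nhds_zero_of_lt_one (r := (10/16:ℝ)) (by norm_num) (by norm_num)).const_mul 4
  rw [mul_zero] at hlim
  obtain ⟨N, hN⟩ := (hlim.eventually (gt_mem_nhds hε)).exists
  classical
  obtain ⟨M, hM⟩ := om_word N (fun j => decide (0 ≤ (GG t)^[j] y))
  refine ⟨M, ?_⟩
  have h := T.same_itin (T.iter_maps hz M) hy (fun j => decide (0 ≤ (GG t)^[j] y)) N (fun n hn => by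
      have := hi (M + n)
      rw [hM n hn, add_comm, Function.iterate_add_apply] at this
      exact this) (fun n _ => by
      constructor
      · intro h; simpa using h
      · intro h; exact (not_le.mp (by simpa using h)).le)
  have h2 := T.AL_lip (T.iter_maps hz M) hy
  have h3 : |AL t ((GG t)^[M] z) - AL t y| ≤ 4 * (10/16) ^ N := by
    rw [show (10/16:ℝ) = (16/10)⁻¹ by norm_num, inv_pow, ← div_eq_mul_inv, le_div_iff₀ (by positivity)]
    linarith
  linarith

lemma QQ_maps (T : Tt t) {y : ℝ} (hy : |y| ≤ t) : |QQ t y| ≤ 2 := by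
  have h1 := T.sq_le hy
  have h2 := T.hi
  have h3 := T.lo
  unfold QQ
  rw [abs_le]; constructor <;> nlinarith [sq_nonneg y]

lemma QQ_iter_bound (T : Tt t) {y : ℝ} (hy : |y| ≤ t) (n : ℕ) : |(QQ t)^[n] y| ≤ 2 := by
  rcases Nat.even_or_odd' n with ⟨m, rfl | rfl⟩
  · rw [← GG_iter]; linarith [T.iter_maps hy m, T.hi]
  · rw [Function.iterate_succ_apply', ← GG_iter]; exact T.QQ_maps (T.iter_maps hy m)

lemma dense_QQ (T : Tt t) {z : ℝ} (hz : |z| ≤ t) (hi : ∀ n, Sd (om n) ((GG t)^[n] z)) :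
    Icc (-t - t ^ 2) t ⊆ closure (range fun n => (QQ t)^[n] z) := by
  have h1 : ∀ y, |y| ≤ t → y ∈ closure (range fun n => (QQ t)^[n] z) := by
    intro y hy
    rw [Metric.mem_closure_iff]
    intro ε hε
    obtain ⟨n, hn⟩ := T.dense_GG hz hi hy hε
    refine ⟨_, ⟨2 * n, rfl⟩, ?_⟩
    simp only
    rw [← GG_iter, dist_comm, Real.dist_eq]; exact hn
  intro y hy
  rcases le_or_gt (-t) y with h | h
  · exact h1 y (abs_le.mpr ⟨h, hy.2⟩)
  · have e : QQ t (√(y + t + t ^ 2)) = y := by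
      unfold QQ; rw [Real.sq_sqrt (by linarith [hy.1])]; ring
    have hs : |√(y + t + t ^ 2)| ≤ t := by
      rw [abs_of_nonneg (Real.sqrt_nonneg _), Real.sqrt_le_left T.pos.le]; linarith
    have := map_mem_closure (t := range fun n => (QQ t)^[n] z) (QQ_cont t) (h1 _ hs) (by
      rintro _ ⟨n, rfl⟩
      exact ⟨n + 1, by simp only [Function.iterate_succ_apply']⟩)
    rwa [e] at this

lemma step5 (T : Tt t) {y : ℝ} (hy : |y| ≤ t) : GG t y + t ≤ 5 * (y + t) ∧ GG t y + t ≤ 5 * (t - y) := by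
  have h1 := T.sq_le hy
  have ⟨h2, h3⟩ := abs_le.mp hy
  have hlo := T.lo
  have hhi := T.hi
  rw [GG_add]
  have e : (t ^ 2 - y ^ 2) * (t ^ 2 + 2 * t - y ^ 2) = (y + t) * (t - y) * (t ^ 2 + 2 * t - y ^ 2) := by ring
  have p0 : 0 ≤ t ^ 2 + 2 * t - y ^ 2 := by nlinarith
  have p1 : t ^ 2 + 2 * t - y ^ 2 ≤ 24/10 := by nlinarith [sq_nonneg y]
  have q1 : (t - y) * (t ^ 2 + 2 * t - y ^ 2) ≤ 5 := by nlinarith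
  have q2 : (t + y) * (t ^ 2 + 2 * t - y ^ 2) ≤ 5 := by nlinarith
  constructor <;> nlinarith

lemma dist_low (T : Tt t) (i : ℕ) {y : ℝ} (hy : |y| ≤ t) (h : 0 ≤ (GG t)^[i] y) : t ≤ 5 ^ i * (y + t) := by
  induction i generalizing y with
  | zero => simp at h ⊢; exact h
  | succ i ih =>
    rw [Function.iterate_succ_apply] at h
    have := ih (T.GG_maps hy) h
    have h2 := mul_le_mul_of_nonneg_left (T.step5 hy).1 (show (0:ℝ) ≤ 5 ^ i by positivity)
    rw [pow_succ]; linarith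

lemma low (T : Tt t) {z : ℝ} (hz : |z| ≤ t) (hi : ∀ n, Sd (om n) ((GG t)^[n] z)) (n : ℕ) :
    t ≤ 5 ^ (Nat.sqrt n) * ((GG t)^[n] z + t) := by
  obtain ⟨i, hin, ho⟩ := om_gap n
  have h := (hi (n + i)).1 ho
  rw [add_comm, Function.iterate_add_apply] at h
  have h1 := T.iter_maps hz n
  have := T.dist_low i h1 h
  have h3 : (5:ℝ) ^ i ≤ 5 ^ (Nat.sqrt n) := pow_le_pow_right₀ (by norm_num) hin
  have h4 := (abs_le.mp h1).1
  nlinarith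

lemma R_low (T : Tt t) {z : ℝ} (hz : |z| ≤ t) (hi : ∀ n, Sd (om n) ((GG t)^[n] z)) (n : ℕ) :
    t ^ 2 ≤ (5 ^ (Nat.sqrt (n + 1) + 1)) ^ 2 * (t ^ 2 - ((GG t)^[n] z) ^ 2) := by
  have h1 := T.low hz hi n
  have h2 := T.low hz hi (n + 1)
  have hm := T.iter_maps hz n
  rw [Function.iterate_succ_apply'] at h2
  set y := (GG t)^[n] z
  have ⟨a1, a2⟩ := abs_le.mp hm
  have h3 : (5:ℝ) ^ (Nat.sqrt n) ≤ 5 ^ (Nat.sqrt (n + 1) + 1) :=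
    pow_le_pow_right₀ (by norm_num) ((Nat.sqrt_le_sqrt (Nat.le_succ n)).trans (Nat.le_succ _))
  have h4 := mul_le_mul_of_nonneg_left (T.step5 hm).2 (show (0:ℝ) ≤ 5 ^ (Nat.sqrt (n + 1)) by positivity)
  have h5 : t ≤ 5 ^ (Nat.sqrt (n + 1) + 1) * (t - y) := by rw [pow_succ]; linarith
  have h6 : t ≤ 5 ^ (Nat.sqrt (n + 1) + 1) * (y + t) := h1.trans (mul_le_mul_of_nonneg_right h3 (by linarith))
  have := mul_le_mul h5 h6 T.pos.le (T.pos.le.trans h5)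
  calc t ^ 2 = t * t := by ring
    _ ≤ _ := this
    _ = _ := by ring

lemma iter_diff (t : ℝ) (n : ℕ) : Differentiable ℝ ((QQ t)^[n]) := by
  apply Differentiable.iterate
  unfold QQ; fun_prop

lemma deriv_succ (t z : ℝ) (n : ℕ) : deriv ((QQ t)^[n+1]) z = 2 * (QQ t)^[n] z * deriv ((QQ t)^[n]) z := by
  rw [Function.iterate_succ']
  exact ((QQ_deriv t _).comp z (iter_diff t n z).hasDerivAt).deriv

lemma CE_even (T : Tt t) {z : ℝ} (hz : |z| ≤ t) (n : ℕ) :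
    (256/100) ^ n * (t ^ 2 - ((GG t)^[n] z) ^ 2) ≤ (deriv ((QQ t)^[2 * n]) z) ^ 2 * (t ^ 2 - z ^ 2) := by
  induction n with
  | zero => simp
  | succ n ih =>
    have hm := T.iter_maps hz n
    have k := T.key hm
    rw [show 2 * (n + 1) = 2 * n + 1 + 1 by ring, deriv_succ, deriv_succ, Function.iterate_succ_apply' (GG t),
      Function.iterate_succ_apply' (QQ t), ← GG_iter]
    set y := (GG t)^[n] z
    set D := deriv ((QQ t)^[2 * n]) z
    have e : 2 * QQ t y * (2 * y * D) = (4 * y * (y ^ 2 - t - t ^ 2)) * D := by unfold QQ; ring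
    rw [e, mul_pow, pow_succ]
    have k1 := mul_le_mul_of_nonneg_left k (show (0:ℝ) ≤ (256/100) ^ n by positivity)
    have k2 := mul_le_mul_of_nonneg_left ih (sq_nonneg (4 * y * (y ^ 2 - t - t ^ 2)))
    linarith

lemma CE_even' (T : Tt t) {z : ℝ} (hz : |z| ≤ t) (hi : ∀ n, Sd (om n) ((GG t)^[n] z)) (n : ℕ) :
    (12/10) ^ n ≤ (4/3) ^ 22 * |deriv ((QQ t)^[2 * n]) z| := by
  have h1 := T.CE_even hz n
  have h2 := T.R_low hz hi n
  set D := deriv ((QQ t)^[2 * n]) z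
  have ht := T.pos
  obtain ⟨P, hP⟩ : ∃ P : ℝ, P = 5 ^ (Nat.sqrt (n + 1) + 1) := ⟨_, rfl⟩
  rw [← hP] at h2
  have hP0 : 0 < P := by rw [hP]; positivity
  have h3 : (256/100) ^ n * t ^ 2 ≤ P ^ 2 * (D ^ 2 * t ^ 2) := by
    have a1 := mul_le_mul_of_nonneg_left h2 (show (0:ℝ) ≤ (256/100) ^ n by positivity)
    have a2 := mul_le_mul_of_nonneg_left h1 (sq_nonneg P)
    have a3 : 0 ≤ P ^ 2 * D ^ 2 * z ^ 2 := by positivity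
    linarith
  have h4 : (256/100) ^ n ≤ P ^ 2 * D ^ 2 := by
    refine le_of_mul_le_mul_right (?_ : _ * t ^ 2 ≤ _ * t ^ 2) (by positivity)
    linarith
  have h5 : (16/10) ^ n ≤ P * |D| := by
    refine (pow_le_pow_iff_left₀ (by positivity) (by positivity) two_ne_zero).mp ?_
    rw [mul_pow, sq_abs, ← pow_mul, mul_comm n 2, pow_mul]
    norm_num at h4 ⊢; exact h4
  have h6 : P ≤ (4/3) ^ (n + 22) := by
    rw [hP]
    obtain ⟨s, hs⟩ : ∃ s, s = Nat.sqrt (n + 1) := ⟨_, rfl⟩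
    have h1 : s * s ≤ n + 1 := hs ▸ Nat.sqrt_le (n + 1)
    rw [← hs]
    have : 6 * (s + 1) ≤ n + 22 := by
      zify at h1 ⊢; nlinarith [sq_nonneg ((s:ℤ) - 3)]
    calc (5:ℝ) ^ (s + 1) ≤ ((4/3) ^ 6) ^ (s + 1) := pow_le_pow_left₀ (by norm_num) (by norm_num) _
      _ = (4/3) ^ (6 * (s + 1)) := by rw [← pow_mul]
      _ ≤ _ := pow_le_pow_right₀ (by norm_num) this
  have h7 : (16/10) ^ n ≤ (4/3) ^ n * ((4/3) ^ 22 * |D|) := by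
    rw [← mul_assoc, ← pow_add]
    exact h5.trans (mul_le_mul_of_nonneg_right h6 (abs_nonneg _))
  have e : (16/10:ℝ) ^ n = (4/3) ^ n * (12/10) ^ n := by rw [← mul_pow]; norm_num
  rw [e] at h7
  exact le_of_mul_le_mul_left h7 (by positivity)

lemma CE (T : Tt t) {z : ℝ} (hz : |z| ≤ t) (hi : ∀ n, Sd (om n) ((GG t)^[n] z)) (n : ℕ) :
    Real.exp (1/20 * n) ≤ (4 * (4/3) ^ 22) * |deriv ((QQ t)^[n]) z| := by
  have hexp : Real.exp (1/10) ≤ 12/10 := by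
    have h := Real.abs_exp_sub_one_sub_id_le (x := 1/10) (by norm_num [abs_le])
    have := (abs_le.mp h).2
    linarith
  have he : ∀ m : ℕ, Real.exp (1/10 * m) ≤ (12/10) ^ m := by
    intro m
    rw [mul_comm, Real.exp_nat_mul]
    exact pow_le_pow_left₀ (Real.exp_pos _).le hexp m
  rcases Nat.even_or_odd' n with ⟨m, rfl | rfl⟩
  · have h := T.CE_even' hz hi m
    have h2 := he m
    have : 0 ≤ (4/3:ℝ) ^ 22 * |deriv ((QQ t)^[2 * m]) z| := by positivity
    push_cast
    rw [show (1/20:ℝ) * (2 * m) = 1/10 * m by ring]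
    linarith
  · have h := T.CE_even' hz hi (m + 1)
    have h2 := he (m + 1)
    rw [show 2 * (m + 1) = 2 * m + 1 + 1 by ring, deriv_succ, abs_mul, abs_mul, abs_two] at h
    have h3 := T.QQ_iter_bound hz (2 * m + 1)
    have h4 : Real.exp (1/20 * ((2 * m + 1 : ℕ) : ℝ)) ≤ Real.exp (1/10 * ((m + 1 : ℕ) : ℝ)) := by
      apply Real.exp_le_exp.mpr; push_cast; linarith
    have h5 : 2 * |(QQ t)^[2 * m + 1] z| * |deriv ((QQ t)^[2 * m + 1]) z| ≤ 4 * |deriv ((QQ t)^[2 * m + 1]) z| :=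
      mul_le_mul_of_nonneg_right (by linarith) (abs_nonneg _)
    have h6 := mul_le_mul_of_nonneg_left h5 (show (0:ℝ) ≤ (4/3) ^ 22 by positivity)
    linarith

lemma exists_z (T : Tt t) : ∃ z, |z| ≤ t ∧ Icc (-t - t ^ 2) t ⊆ closure (range fun n => (QQ t)^[n] z) ∧
    ∃ V : ℝ, 0 < V ∧ ∀ n : ℕ, Real.exp (1/20 * n) ≤ V * |deriv ((QQ t)^[n]) z| := by
  obtain ⟨z, hz, hi⟩ := T.exists_itin om
  exact ⟨z, hz, T.dense_QQ hz hi, _, by positivity, T.CE hz hi⟩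

end Tt



noncomputable def qf (t : ℝ) (N : ℕ) (x y : ℝ) : ℝ :=
  y + (y ^ 2 - y - t - t ^ 2) * (x ^ (2 * N) + (1 - x ^ (2 * N)) * (1 - 2 * y) * (1 / (1 + 2 * t) ^ 2))

noncomputable def Fm (r t : ℝ) (N : ℕ) (p : ℝ × ℝ) : ℝ × ℝ := (pp r p.1, qf t N p.1 p.2)

lemma qf_one (t : ℝ) (N : ℕ) (y : ℝ) : qf t N 1 y = QQ t y := by
  unfold qf QQ; simp; ring

lemma Fm_diff (r t : ℝ) (N : ℕ) : Differentiable ℝ (Fm r t N) := by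
  unfold Fm pp qf; fun_prop

lemma Fm_poly (r t : ℝ) (N : ℕ) (hr : 6/5 ≤ r) : IsPolyMapDegTwo (Fm r t N) := by
  open MvPolynomial in
  refine ⟨1 - C r * (1 - X 0 ^ 2) ^ 2,
    X 1 + (X 1 ^ 2 - X 1 - C t - C t ^ 2) * (X 0 ^ (2 * N) + (1 - X 0 ^ (2 * N)) * (1 - 2 * X 1) *
      C (1 / (1 + 2 * t) ^ 2)), ?_, ?_⟩
  · refine le_max_of_le_left ?_
    have e : (1 - C r * (1 - X 0 ^ 2) ^ 2 : MvPolynomial (Fin 2) ℝ) =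
      monomial 0 (1 - r) + monomial (Finsupp.single 0 2) (2 * r) - monomial (Finsupp.single 0 4) r := by
      have h2 : (monomial (Finsupp.single 0 2) (2 * r) : MvPolynomial (Fin 2) ℝ) = C (2 * r) * X 0 ^ 2 := by
        rw [X_pow_eq_monomial, C_mul_monomial, mul_one]
      have h4 : (monomial (Finsupp.single 0 4) r : MvPolynomial (Fin 2) ℝ) = C r * X 0 ^ 4 := by
        rw [X_pow_eq_monomial, C_mul_monomial, mul_one]
      have h0 : (monomial 0 (1 - r) : MvPolynomial (Fin 2) ℝ) = 1 - C r := by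
        rw [← C_apply, C_sub, C_1]
      rw [h2, h4, h0, C_mul]
      have : (C 2 : MvPolynomial (Fin 2) ℝ) = 2 := map_ofNat C 2
      rw [this]; ring
    have hm : (Finsupp.single 0 2 : Fin 2 →₀ ℕ) ∈
        (1 - C r * (1 - X 0 ^ 2) ^ 2 : MvPolynomial (Fin 2) ℝ).support := by
      rw [e, mem_support_iff]
      rw [coeff_sub, coeff_add, coeff_monomial, coeff_monomial, coeff_monomial]
      rw [if_neg, if_pos rfl, if_neg]
      · intro h; linarith
      · intro h; have := DFunLike.congr_fun h 0; simp at this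
      · intro h; have := DFunLike.congr_fun h 0; simp at this
    have := le_totalDegree hm
    simpa using this
  · intro p
    simp [Fm, pp, qf]

lemma qf_low {t : ℝ} (T : Tt t) (N : ℕ) (x y : ℝ) (h : x ^ (2 * N) ≤ 1/20) (hy : |y - (-t)| < 1/10) :
    |qf t N x y - (-t)| ≤ 1/2 * |y - (-t)| := by
  have h0 : 0 ≤ x ^ (2 * N) := by rw [pow_mul]; positivity
  unfold qf
  generalize x ^ (2 * N) = c at h h0
  have t1 := T.lo
  have t2 := T.hi
  have hD : 1 + 2 * t ≠ 0 := by linarith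
  set D := 1 + 2 * t with hDd
  obtain ⟨e, rfl⟩ : ∃ e, y = e - t := ⟨y + t, by ring⟩
  have : e - t + ((e - t) ^ 2 - (e - t) - t - t ^ 2) * (c + (1 - c) * (1 - 2 * (e - t)) * (1 / D ^ 2)) - -t
    = ((1 - c) * (3 * (e / D) - 2 * (e / D) ^ 2) + c * (e - 2 * t)) * (e - t - -t) := by
    field_simp
    rw [hDd]; ring
  rw [this, abs_mul]
  refine mul_le_mul_of_nonneg_right ?_ (abs_nonneg _)
  have he : |e| < 1/10 := by convert hy using 2; ring
  have hu : |e / D| ≤ 1/26 := by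
    rw [abs_div, div_le_iff₀ (by rw [abs_pos]; exact hD), abs_of_pos (by linarith : 0 < D)]
    linarith
  rw [abs_lt] at he
  rw [abs_le] at hu ⊢
  generalize e / D = u at hu
  have hw : |3 * u - 2 * u ^ 2| ≤ 3/26 + 2/676 := by
    rw [abs_le]; constructor <;> nlinarith
  rw [abs_le] at hw
  generalize 3 * u - 2 * u ^ 2 = w at hw
  constructor <;> nlinarith

lemma qf_high {t : ℝ} (T : Tt t) (N : ℕ) (x y : ℝ) (h : x ^ (2 * N) ≤ 1/20) (hy : |y - (1 + t)| < 1/10) :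
    |qf t N x y - (1 + t)| ≤ 1/2 * |y - (1 + t)| := by
  have h0 : 0 ≤ x ^ (2 * N) := by rw [pow_mul]; positivity
  unfold qf
  generalize x ^ (2 * N) = c at h h0
  have t1 := T.lo
  have t2 := T.hi
  have hD : 1 + 2 * t ≠ 0 := by linarith
  set D := 1 + 2 * t with hDd
  obtain ⟨e, rfl⟩ : ∃ e, y = e + (1 + t) := ⟨y - (1 + t), by ring⟩
  have : e + (1 + t) + ((e + (1 + t)) ^ 2 - (e + (1 + t)) - t - t ^ 2) * (c + (1 - c) * (1 - 2 * (e + (1 + t))) * (1 / D ^ 2)) - (1 + t)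
    = (-(1 - c) * (3 * (e / D) + 2 * (e / D) ^ 2) + c * (e + 1 + D)) * (e + (1 + t) - (1 + t)) := by
    field_simp
    rw [hDd]; ring
  rw [this, abs_mul]
  refine mul_le_mul_of_nonneg_right ?_ (abs_nonneg _)
  have he : |e| < 1/10 := by convert hy using 2; ring
  have hu : |e / D| ≤ 1/26 := by
    rw [abs_div, div_le_iff₀ (by rw [abs_pos]; exact hD), abs_of_pos (by linarith : 0 < D)]
    linarith
  rw [abs_lt] at he
  rw [abs_le] at hu ⊢
  generalize e / D = u at hu
  have hw : |3 * u + 2 * u ^ 2| ≤ 3/26 + 2/676 := by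
    rw [abs_le]; constructor <;> nlinarith
  rw [abs_le] at hw
  generalize 3 * u + 2 * u ^ 2 = w at hw
  constructor <;> nlinarith

lemma pp_contr {r x : ℝ} (h1 : 6/5 ≤ r) (h2 : r ≤ 2) (hx : |x - 1| ≤ 1/20) :
    |pp r x - 1| ≤ 1/2 * |x - 1| := by
  have e : pp r x - 1 = - (r * (1 + x) ^ 2 * (x - 1)) * (x - 1) := by unfold pp; ring
  rw [e, abs_mul]
  refine mul_le_mul_of_nonneg_right ?_ (abs_nonneg _)
  have hx' := abs_le.1 hx
  rw [abs_neg, abs_mul, abs_of_nonneg (by positivity)]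
  have : r * (1 + x) ^ 2 ≤ 2 * (5) := by
    apply mul_le_mul h2 (by nlinarith) (by positivity) (by norm_num)
  calc _ ≤ 2 * 5 * (1/20 : ℝ) := by gcongr
    _ = _ := by norm_num

lemma pp_eq_one {r x : ℝ} (h1 : 6/5 ≤ r) (hx : |x - 1| ≤ 1/20) (h : pp r x = 1) : x = 1 := by
  unfold pp at h
  have hx' := abs_le.1 hx
  have : r * (1 - x ^ 2) ^ 2 = 0 := by linarith
  have h3 : (1 - x ^ 2) = 0 := by
    rcases mul_eq_zero.1 this with h | h
    · linarith
    · exact pow_eq_zero_iff (two_ne_zero) |>.1 h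
  have : (x - 1) * (x + 1) = 0 := by linarith
  rcases mul_eq_zero.1 this with h | h <;> linarith

lemma pp_one (r : ℝ) : pp r 1 = 1 := by unfold pp; ring

lemma Fm_iter_one (r t : ℝ) (N n : ℕ) (y : ℝ) : (Fm r t N)^[n] (1, y) = (1, (QQ t)^[n] y) := by
  induction n generalizing y with
  | zero => rfl
  | succ n ih =>
    rw [Function.iterate_succ_apply, Function.iterate_succ_apply, ← ih]
    congr 1
    simp [Fm, pp_one, qf_one]

namespace Tt
variable {t : ℝ}

lemma QQa (T : Tt t) : QQ t (-t - t ^ 2) = t := by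
  have := T.h
  unfold QQ; linear_combination t * this

lemma QQ_surj (T : Tt t) : Icc (-t - t ^ 2) t ⊆ QQ t '' Icc (-t - t ^ 2) t := by
  have t1 := T.lo
  have hs := intermediate_value_Icc' (show -t - t ^ 2 ≤ 0 by nlinarith) ((QQ_cont t).continuousOn)
  rw [T.QQa] at hs
  have h0 : QQ t 0 = - t - t ^ 2 := by unfold QQ; ring
  rw [h0] at hs
  exact hs.trans (image_mono (Icc_subset_Icc_right (by linarith)))

lemma QQ_V (T : Tt t) {y : ℝ} (hy : y ∈ Icc (-t - t ^ 2 - 1/100) (t + 1/10)) :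
    QQ t y ∈ Icc (-t - t ^ 2) (t + 1/20) := by
  have t1 := T.lo
  have t2 := T.hi
  have h := T.QQa
  unfold QQ at h ⊢
  constructor
  · nlinarith [sq_nonneg y]
  · have : y ^ 2 ≤ (-t - t ^ 2 - 1/100) ^ 2 := by
      have hh : 0 ≤ -(-t - t ^ 2 - 1/100) - y := by nlinarith [hy.2]
      linarith [mul_nonneg (sub_nonneg.2 hy.1) hh]
    nlinarith

lemma QQ_V2 (T : Tt t) {y : ℝ} (hy : y ∈ Icc (-t - t ^ 2) (t + 1/20)) :
    QQ t y ∈ Icc (-t - t ^ 2) t := by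
  have t1 := T.lo
  have t2 := T.hi
  have h := T.QQa
  unfold QQ at h ⊢
  constructor
  · nlinarith [sq_nonneg y]
  · have : y ^ 2 ≤ (-t - t ^ 2) ^ 2 := by
      have hh : 0 ≤ -(-t - t ^ 2) - y := by nlinarith [hy.2]
      linarith [mul_nonneg (sub_nonneg.2 hy.1) hh]
    nlinarith

end Tt

lemma Fm_strange {r t : ℝ} (N : ℕ) (h1 : 6/5 ≤ r) (h2 : r ≤ 2) (T : Tt t) :
    IsStrangeAttractor (Fm r t N) ({1} ×ˢ Icc (-t - t ^ 2) t) := by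
  have t1 := T.lo
  have t2 := T.hi
  have hFc : Continuous (Fm r t N) := (Fm_diff r t N).continuous
  obtain ⟨ε, hε, hε1, hεq⟩ : ∃ ε : ℝ, 0 < ε ∧ ε ≤ 1/20 ∧ ∀ x, |x - 1| ≤ ε →
      ∀ y ∈ Icc (-t - t ^ 2 - 1/100) (t + 1/10), qf t N x y ∈ Ioo (-t - t ^ 2 - 1/100) (t + 1/10) := by
    have hc : Continuous fun p : ℝ × ℝ => qf t N p.1 p.2 := continuous_snd.comp hFc
    have ev : ∀ᶠ x in nhds (1:ℝ), ∀ y ∈ Icc (-t - t ^ 2 - 1/100) (t + 1/10),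
        qf t N x y ∈ Ioo (-t - t ^ 2 - 1/100) (t + 1/10) := by
      refine isCompact_Icc.eventually_forall_of_forall_eventually ?_
      intro y hy
      refine hc.continuousAt.eventually_mem (isOpen_Ioo.mem_nhds ?_)
      simp only [qf_one]
      have := T.QQ_V hy
      exact ⟨by linarith [this.1], by linarith [this.2]⟩
    obtain ⟨ε, hε, h⟩ := Metric.eventually_nhds_iff.1 ev
    refine ⟨min (ε/2) (1/20), by positivity, min_le_right _ _, fun x hx => h ?_⟩
    rw [Real.dist_eq]
    exact lt_of_le_of_lt (hx.trans (min_le_left _ _)) (by linarith)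
  set U : Set (ℝ × ℝ) := Ioo (1 - ε) (1 + ε) ×ˢ Ioo (-t - t ^ 2 - 1/100) (t + 1/10) with hU
  set K : Set (ℝ × ℝ) := Icc (1 - ε) (1 + ε) ×ˢ Icc (-t - t ^ 2 - 1/100) (t + 1/10) with hK
  have hUK : U ⊆ K := prod_mono Ioo_subset_Icc_self Ioo_subset_Icc_self
  have hKU : Fm r t N '' K ⊆ U := by
    rintro _ ⟨⟨x, y⟩, ⟨hx, hy⟩, rfl⟩
    simp only at hx hy
    have hx' : |x - 1| ≤ ε := abs_le.2 ⟨by linarith [hx.1], by linarith [hx.2]⟩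
    have hp := pp_contr h1 h2 (hx'.trans hε1)
    refine ⟨?_, hεq x hx' y hy⟩
    have := abs_lt.1 (show |pp r x - 1| < ε by linarith)
    exact ⟨by simp only [Fm]; linarith [this.1], by simp only [Fm]; linarith [this.2]⟩
  have hFU : ∀ p ∈ U, Fm r t N p ∈ U := fun p hp => hKU ⟨p, hUK hp, rfl⟩
  have hUx : ∀ p ∈ U, |p.1 - 1| < ε := fun p hp =>
    abs_lt.2 ⟨by linarith [hp.1.1], by linarith [hp.1.2]⟩
  have hSU : ({1} ×ˢ Icc (-t - t ^ 2) t : Set (ℝ × ℝ)) ⊆ U := by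
    rintro ⟨x, y⟩ ⟨hx, hy⟩
    simp only [mem_singleton_iff] at hx hy
    subst hx
    exact ⟨⟨by simp only; linarith, by simp only; linarith⟩, ⟨by simp only; linarith [hy.1], by simp only; linarith [hy.2]⟩⟩
  have hSF : ({1} ×ˢ Icc (-t - t ^ 2) t : Set (ℝ × ℝ)) ⊆ Fm r t N '' ({1} ×ˢ Icc (-t - t ^ 2) t) := by
    rintro ⟨x, y⟩ ⟨hx, hy⟩
    simp only [mem_singleton_iff] at hx hy
    subst hx
    obtain ⟨w, hw, rfl⟩ := T.QQ_surj hy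
    exact ⟨(1, w), ⟨rfl, hw⟩, by simp [Fm, pp_one, qf_one]⟩
  have hSj : ∀ j : ℕ, ({1} ×ˢ Icc (-t - t ^ 2) t : Set (ℝ × ℝ)) ⊆ (Fm r t N)^[j] '' ({1} ×ˢ Icc (-t - t ^ 2) t) := by
    intro j
    induction j with
    | zero => simp
    | succ j ih =>
      rw [Function.iterate_succ, image_comp]
      exact ih.trans (image_mono hSF)
  have hcj : ∀ (j : ℕ), ∀ p ∈ U, (Fm r t N)^[j] p ∈ U ∧ |((Fm r t N)^[j] p).1 - 1| ≤ (1/2) ^ j * ε := by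
    intro j p hp
    induction j with
    | zero => exact ⟨hp, by simpa using (hUx p hp).le⟩
    | succ j ih =>
      rw [Function.iterate_succ_apply']
      refine ⟨hFU _ ih.1, ?_⟩
      have := pp_contr h1 h2 ((hUx _ ih.1).le.trans hε1)
      calc _ ≤ 1/2 * |((Fm r t N)^[j] p).1 - 1| := this
        _ ≤ 1/2 * ((1/2) ^ j * ε) := by linarith [ih.2]
        _ = _ := by ring
  obtain ⟨z, hz, hzd, V, hV, hz3⟩ := T.exists_z
  have hzS : z ∈ Icc (-t - t ^ 2) t := by
    have := abs_le.1 hz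
    exact ⟨by nlinarith [this.1], this.2⟩
  refine ⟨U, isOpen_Ioo.prod isOpen_Ioo, ?_, ?_, (1, z), ⟨rfl, hzS⟩, ?_, (0, V), ?_, 1/20, by norm_num, ?_⟩
  · refine (closure_minimal (image_mono hUK) ?_).trans hKU
    exact ((isCompact_Icc.prod isCompact_Icc).image hFc).isClosed
  · apply subset_antisymm
    · exact subset_iInter fun j => (hSj j).trans (image_mono hSU)
    · intro w hw
      rw [mem_iInter] at hw
      have hw1 : w.1 = 1 := by
        have hle : ∀ j : ℕ, |w.1 - 1| ≤ (1/2) ^ j * ε := by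
          intro j
          obtain ⟨p, hp, rfl⟩ := hw j
          exact (hcj j p hp).2
        have hlim : Tendsto (fun j : ℕ => (1/2 : ℝ) ^ j * ε) atTop (nhds (0 * ε)) :=
          (tendsto_pow_atTop_nhds_zero_of_lt_one (by norm_num) (by norm_num)).mul_const ε
        rw [zero_mul] at hlim
        have := ge_of_tendsto' hlim hle
        have := abs_eq_zero.1 (le_antisymm this (abs_nonneg _))
        linarith
      obtain ⟨p, hp, rfl⟩ := hw 2
      have e1 : (Fm r t N p).1 = 1 := pp_eq_one h1 ((hUx _ (hFU p hp)).le.trans hε1) hw1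
      have e2 : p.1 = 1 := pp_eq_one h1 ((hUx _ hp).le.trans hε1) e1
      obtain ⟨x, y⟩ := p
      simp only at e2
      subst e2
      rw [Fm_iter_one]
      exact ⟨rfl, T.QQ_V2 (T.QQ_V ⟨hp.2.1.le, hp.2.2.le⟩)⟩
  · simp only [Fm_iter_one]
    rintro ⟨x, y⟩ ⟨hx, hy⟩
    simp only [mem_singleton_iff] at hx hy
    subst hx
    have hm := hzd hy
    have := image_closure_subset_closure_image (f := fun y : ℝ => ((1:ℝ), y)) (by fun_prop) ⟨y, hm, rfl⟩
    rw [← range_comp] at this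
    exact this
  · intro h
    have := congrArg Prod.snd h
    simp at this
    linarith
  · intro n _
    have hd : DifferentiableAt ℝ (Fm r t N)^[n] (1, z) := ((Fm_diff r t N).iterate n) _
    have hc : HasDerivAt (fun s : ℝ => ((1:ℝ), z + s * V)) (0, V) 0 := by
      refine (hasDerivAt_const _ _).prodMk ?_
      simpa using ((hasDerivAt_id (0:ℝ)).mul_const V).const_add z
    have hd0 : HasFDerivAt (Fm r t N)^[n] (fderiv ℝ (Fm r t N)^[n] (1, z)) ((fun s : ℝ => ((1:ℝ), z + s * V)) 0) := by
      simpa using hd.hasFDerivAt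
    have hA := hd0.comp_hasDerivAt (0:ℝ) hc
    have hq : HasDerivAt (QQ t)^[n] (deriv (QQ t)^[n] z) (z + 0 * V) := by
      simpa using (Tt.iter_diff t n z).hasDerivAt
    have hc2 : HasDerivAt (fun s : ℝ => z + s * V) V 0 := by
      simpa using ((hasDerivAt_id (0:ℝ)).mul_const V).const_add z
    have hB := (hasDerivAt_const (0:ℝ) (1:ℝ)).prodMk (HasDerivAt.comp (0:ℝ) hq hc2)
    have heq : ((Fm r t N)^[n] ∘ fun s : ℝ => ((1:ℝ), z + s * V)) =
        fun s : ℝ => ((1:ℝ), ((QQ t)^[n] ∘ fun s : ℝ => z + s * V) s) := by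
      funext s; simp [Fm_iter_one]
    rw [heq] at hA
    rw [hA.unique hB]
    refine (hz3 n).trans ?_
    refine le_trans ?_ (norm_snd_le _)
    rw [Real.norm_eq_abs, abs_mul, abs_of_pos hV, mul_comm]

theorem exists_polyMap_with_two_PD_attractors_and_strange_attractor :
    ∃ f : ℝ × ℝ → ℝ × ℝ, IsPolyMapDegTwo f ∧
      (∃ A B : Set (ℝ × ℝ), IsPDCantorAttractor f A ∧ IsPDCantorAttractor f B ∧
        Disjoint A B) ∧
      ∃ Λ : Set (ℝ × ℝ), IsStrangeAttractor f Λ := by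
  obtain ⟨r, b, W⟩ := exists_tower
  obtain ⟨t, T⟩ := exists_Tt
  have t1 := T.lo
  have hb0 := W.bpos 0
  obtain ⟨N, hN⟩ := exists_pow_lt_of_lt_one (show (0:ℝ) < 1/20 by norm_num)
    (show b 0 ^ 2 < 1 by nlinarith [W.b01])
  have hx : ∀ x : ℝ, |x| < b 0 → x ^ (2 * N) ≤ 1/20 := by
    intro x hx
    rw [pow_mul]
    refine le_trans (pow_le_pow_left₀ (sq_nonneg x) ?_ N) hN.le
    rw [← sq_abs]
    gcongr
  refine ⟨Fm r t N, Fm_poly r t N W.r1, ⟨_, _,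
    W.pd_attractor (qf t N) (-t) (1/10) (by norm_num) ?_ (fun x y h h' => qf_low T N x y (hx x h) h')
      (Fm r t N) (fun _ _ => rfl),
    W.pd_attractor (qf t N) (1 + t) (1/10) (by norm_num) ?_ (fun x y h h' => qf_high T N x y (hx x h) h')
      (Fm r t N) (fun _ _ => rfl), ?_⟩, _, Fm_strange N W.r1 W.r2 T⟩
  · intro x; unfold qf; ring
  · intro x; unfold qf; ring
  · rw [Set.disjoint_left]
    rintro _ ⟨τ, rfl⟩ ⟨σ, h⟩
    have := congrArg Prod.snd h
    simp only at this
    linarith
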